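/- Suppose x : ℕ → Fin 2 is recurrent, not periodic, and has non-superlinear maximal pattern complexity, i.e. liminf_{n→∞} p*_x(n)/n < ∞. Then x is uniformly recurrent and at least one of the following holds: (1) there exist K ≥ 1 and an irrational β such that for every 0 ≤ j < K the sequence x⁽ʲ⁾ defined by x⁽ʲ⁾(n) = x(j + Kn) is either constant or a circle rotation interval coding sequence with rotation number β; or (2) there exist m ≥ 1 and an m-hole Toeplitz sequence z such that x lies in the orbit closure of z. -/

import Mathlib

open Set

abbrev Seq2 := ℕ → Fin 2

def patLang (x : Seq2) (τ : Finset ℕ) : Set ((s : τ) → Fin 2) :=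
  {w | ∃ m : ℕ, ∀ s : τ, w s = x (m + (s : ℕ))}

noncomputable def pstar (x : Seq2) (n : ℕ) : ℕ :=
  sSup {c : ℕ | ∃ τ : Finset ℕ, τ.card = n ∧ (patLang x τ).ncard = c}

def Recurrent (x : Seq2) : Prop :=
  ∀ L : ℕ, ∃ M : ℕ, 1 ≤ M ∧ ∀ i < L, x i = x (M + i)

def Syndetic (S : Set ℕ) : Prop :=
  ∃ g : ℕ, ∀ n : ℕ, ∃ m ∈ S, n ≤ m ∧ m < n + g

def UniformlyRecurrent (x : Seq2) : Prop :=
  ∀ L : ℕ, Syndetic {M : ℕ | 1 ≤ M ∧ ∀ i < L, x i = x (M + i)}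

def Periodic (x : Seq2) : Prop := ∃ t : ℕ, 1 ≤ t ∧ ∀ n : ℕ, x (n + t) = x n

def orbitClosure (x : Seq2) : Set Seq2 :=
  closure {y : Seq2 | ∃ m : ℕ, y = fun n => x (m + n)}

abbrev T1 := AddCircle (1 : ℝ)

def IsArc (I : Set T1) : Prop :=
  ∃ a b : ℝ, b - a ≤ 1 ∧
    (I = (fun r : ℝ => (r : T1)) '' Set.Icc a b ∨
     I = (fun r : ℝ => (r : T1)) '' Set.Ico a b ∨
     I = (fun r : ℝ => (r : T1)) '' Set.Ioc a b ∨
     I = (fun r : ℝ => (r : T1)) '' Set.Ioo a b)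

/-- A circle rotation interval coding sequence with (irrational) rotation number `β`:
a coding of the orbit of `0` under rotation by `β` by a partition of the circle into
finitely many intervals, with coding letters not all equal. -/
def CircleRotationCoding (β : ℝ) (y : Seq2) : Prop :=
  ∃ (k : ℕ), 1 ≤ k ∧ ∃ (I : Fin k → Set T1) (a : Fin k → Fin 2),
    (∀ i, IsArc (I i)) ∧
    (Pairwise fun i j => Disjoint (I i) (I j)) ∧
    (⋃ i, I i) = Set.univ ∧
    (¬ ∀ i j, a i = a j) ∧
    (∀ (n : ℕ) (i : Fin k), (((n : ℝ) * β : ℝ) : T1) ∈ I i → y n = a i)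

/-- Toeplitz sequence with period structure `nk` (indexed from 0). -/
def ToeplitzWith (nk : ℕ → ℕ) (z : Seq2) : Prop :=
  (∀ k, 1 ≤ nk k ∧ nk k ∣ nk (k + 1) ∧ nk k < nk (k + 1)) ∧
  (∀ n : ℕ, ∃ k : ℕ, ∀ m : ℕ, m % nk k = n % nk k → z m = z n)

/-- `m`-hole Toeplitz sequence: for every `k`, exactly `m` residue classes mod `nk k`
are nonconstant. -/
def MHoleToeplitz (m : ℕ) (z : Seq2) : Prop :=
  ∃ nk : ℕ → ℕ, ToeplitzWith nk z ∧
    ∀ k : ℕ,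
      {j : ℕ | j < nk k ∧ ∃ m₁ m₂ : ℕ, m₁ % nk k = j ∧ m₂ % nk k = j ∧ z m₁ ≠ z m₂}.ncard = m

/-!
If `p*` is infinitely often at most linear, then every window lies in a finite window `S` through
which no time splits more than a bounded number of patterns: each pattern that a new position
splits adds one to the count of patterns. This tameness drives every step.

* If returns to a prefix had unbounded gaps, arbitrarily long gaps continued in the same way would
  place more splittings at one time than a tame window allows.
* Tameness bounds the density with which the patterns through a window split, so that some pattern
  determines `x` along an arithmetic progression up to a bounded number of residues, the holes. If
  the recognizable periods obtained in this way are unbounded, a chain of them exhibits `x` as a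
  limit of shifts of a Toeplitz sequence.
* Otherwise there is a largest recognizable period `K`. Completing `ℤ` for the Besicovitch distance
  between the shifts of `x` by multiples of `K` gives a compact abelian group `H`, connected because
  `K` is maximal. The closures in `H` of the times of either letter overlap, by tameness, only in
  finitely many points. So a finite set separates `H`, and the flux of a small translation across
  one of its points is an injective local coordinate: `H` is a circle, and the letters are coded by
  arcs.
-/

section Windows

variable {α β γ : Type*}

/-- The pattern of `x` seen through the window `S` placed at position `m`. -/
def pattern (x : ℕ → α) (S : Finset ℕ) (m : ℕ) : S → α := fun s => x (m + s)

/-- The times `u` that split the pattern `w`: two occurrences of `w` carry different letters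
`u` steps later. -/
def splitTimes (x : ℕ → α) (S : Finset ℕ) (w : S → α) : Set ℕ :=
  {u | ∃ m k, pattern x S m = w ∧ pattern x S k = w ∧ x (m + u) ≠ x (k + u)}

/-- A window through which no time splits more than `C` patterns. -/
def IsTame (C : ℕ) (x : ℕ → α) (S : Finset ℕ) : Prop :=
  ∀ u, {w | u ∈ splitTimes x S w}.ncard ≤ C

/-- Every window is contained in a tame one. -/
def CofinallyTame (C : ℕ) (x : ℕ → α) : Prop :=
  ∀ S₀, ∃ S, S₀ ⊆ S ∧ IsTame C x S

/-- For infinitely many `n`, every window with at most `n` elements shows at most `C * n`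
patterns. -/
def NonSuperlinear (x : ℕ → α) : Prop :=
  ∃ C : ℕ, ∀ N, ∃ n ≥ N, ∀ S : Finset ℕ, S.card ≤ n → (range (pattern x S)).ncard ≤ C * n

theorem pattern_eq_iff {x : ℕ → α} {S : Finset ℕ} {m k : ℕ} :
    pattern x S m = pattern x S k ↔ ∀ s ∈ S, x (m + s) = x (k + s) := by
  simp only [funext_iff, pattern, Subtype.forall]

theorem pattern_eq_mono {x : ℕ → α} {S T : Finset ℕ} (hST : S ⊆ T) {m k : ℕ}
    (h : pattern x T m = pattern x T k) : pattern x S m = pattern x S k :=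
  pattern_eq_iff.2 fun s hs => pattern_eq_iff.1 h s (hST hs)

theorem ncard_range_le_of_factorsThrough [Finite β] [Nonempty γ] {f : ℕ → β} {g : ℕ → γ}
    (h : g.FactorsThrough f) : (range g).ncard ≤ (range f).ncard := by
  obtain ⟨e, rfl⟩ := (Function.factorsThrough_iff g).1 h
  rw [range_comp]
  exact ncard_image_le (toFinite _)

theorem ncard_range_pattern_add_ncard_split_le [Finite α] (x : ℕ → α) (S : Finset ℕ) (u : ℕ) :
    (range (pattern x S)).ncard + {w | u ∈ splitTimes x S w}.ncard
      ≤ (range (pattern x (insert u S))).ncard := by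
  have restrict {m k : ℕ} (h : pattern x (insert u S) m = pattern x (insert u S) k) :
      pattern x S m = pattern x S k := pattern_eq_mono (Finset.subset_insert u S) h
  have hσ : ∀ w ∈ range (pattern x S), ∃ m, pattern x S m = w := fun _ h => h
  choose! σ hσ using hσ
  have hτ : ∀ w ∈ {w | u ∈ splitTimes x S w},
      ∃ m, pattern x S m = w ∧ x (m + u) ≠ x (σ w + u) := by
    rintro w ⟨m, k, hm, hk, hne⟩
    by_cases h : x (m + u) = x (σ w + u)
    · exact ⟨k, hk, fun h' => hne (h.trans h'.symm)⟩
    · exact ⟨m, hm, h⟩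
  choose! τ hτ hτne using hτ
  set P := pattern x (insert u S)
  have injσ : InjOn (P ∘ σ) (range (pattern x S)) := fun w hw w' hw' h =>
    (hσ w hw).symm.trans ((restrict h).trans (hσ w' hw'))
  have injτ : InjOn (P ∘ τ) {w | u ∈ splitTimes x S w} := fun w hw w' hw' h =>
    (hτ w hw).symm.trans ((restrict h).trans (hτ w' hw'))
  have disj : Disjoint ((P ∘ σ) '' range (pattern x S))
      ((P ∘ τ) '' {w | u ∈ splitTimes x S w}) := by
    rw [disjoint_left]
    rintro _ ⟨w, hw, rfl⟩ ⟨w', hw', h⟩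
    obtain rfl : w' = w := (hτ w' hw').symm.trans ((restrict h).trans (hσ w hw))
    exact hτne w' hw' (pattern_eq_iff.1 h u (Finset.mem_insert_self u S))
  rw [← injσ.ncard_image, ← injτ.ncard_image, ← ncard_union_eq disj]
  refine ncard_le_ncard (union_subset ?_ ?_)
  all_goals exact (image_subset_range _ _).trans (range_comp_subset_range _ _)

theorem IsTame.card_le [Finite α] {C : ℕ} {x : ℕ → α} {S : Finset ℕ} (hS : IsTame C x S) {u : ℕ}
    {F : Finset ℕ} (hinj : InjOn (pattern x S) F)
    (hsplit : ∀ m ∈ F, u ∈ splitTimes x S (pattern x S m)) : F.card ≤ C := by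
  rw [← ncard_coe_finset, ← hinj.ncard_image]
  refine (ncard_le_ncard ?_).trans (hS u)
  rintro _ ⟨m, hm, rfl⟩
  exact hsplit m hm

theorem NonSuperlinear.exists_cofinallyTame [Finite α] {x : ℕ → α} (h : NonSuperlinear x) :
    ∃ C, CofinallyTame C x := by
  obtain ⟨C, hC⟩ := h
  refine ⟨C, ?_⟩
  by_contra hwild
  simp only [CofinallyTame, IsTame] at hwild
  push Not at hwild
  obtain ⟨S₀, hS₀⟩ := hwild
  have growth : ∀ k, ∃ S, S₀ ⊆ S ∧ S.card ≤ S₀.card + k ∧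
      (C + 1) * k ≤ (range (pattern x S)).ncard := by
    intro k
    induction k with
    | zero => exact ⟨S₀, subset_rfl, le_rfl, Nat.zero_le _⟩
    | succ k ih =>
      obtain ⟨S, hS, hcard, hlarge⟩ := ih
      obtain ⟨u, hu⟩ := hS₀ S hS
      have := ncard_range_pattern_add_ncard_split_le x S u
      have := Finset.card_insert_le u S
      exact ⟨insert u S, hS.trans (Finset.subset_insert u S), by lia, by lia⟩
  obtain ⟨n, hn, hbound⟩ := hC (S₀.card + C * S₀.card + 1)
  obtain ⟨k, rfl⟩ := Nat.exists_eq_add_of_le (show S₀.card ≤ n by lia)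
  obtain ⟨S, -, hcard, hlarge⟩ := growth k
  have := hlarge.trans (hbound S hcard)
  nlinarith

theorem NonSuperlinear.of_block_code [Finite α] [Nonempty β] {x : ℕ → α} {y : ℕ → β}
    {L : ℕ} (hx : NonSuperlinear x)
    (hy : ∀ m k, (∀ i ≤ L, x (m + i) = x (k + i)) → y m = y k) : NonSuperlinear y := by
  obtain ⟨C, hC⟩ := hx
  refine ⟨C * (2 * (L + 1)), fun N => ?_⟩
  obtain ⟨n, hn, hbound⟩ := hC ((L + 1) * (N + 1))
  have hN : N + 1 ≤ n / (L + 1) := (Nat.le_div_iff_mul_le L.succ_pos).2 (by lia)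
  refine ⟨n / (L + 1), by lia, fun S hS => ?_⟩
  have hfactor : (pattern y S).FactorsThrough
      (pattern x (Finset.image₂ (· + ·) S (Finset.range (L + 1)))) := by
    intro m k h
    refine pattern_eq_iff.2 fun s hs => hy _ _ fun i hi => ?_
    have := pattern_eq_iff.1 h (s + i)
      (Finset.mem_image₂_of_mem hs (Finset.mem_range.2 (by lia)))
    simpa only [add_assoc] using this
  have hcard : (Finset.image₂ (· + ·) S (Finset.range (L + 1))).card ≤ n := calc
    _ ≤ S.card * (L + 1) := by simpa using Finset.card_image₂_le (· + ·) S (Finset.range (L + 1))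
    _ ≤ n / (L + 1) * (L + 1) := Nat.mul_le_mul_right _ hS
    _ ≤ n := Nat.div_mul_le_self n (L + 1)
  have hn' : n ≤ 2 * (L + 1) * (n / (L + 1)) := by
    have := Nat.lt_div_mul_add (a := n) L.succ_pos
    nlinarith
  calc (range (pattern y S)).ncard ≤ C * n :=
        (ncard_range_le_of_factorsThrough hfactor).trans (hbound _ hcard)
    _ ≤ C * (2 * (L + 1)) * (n / (L + 1)) := by
        rw [mul_assoc]
        exact Nat.mul_le_mul_left C hn'

theorem exists_frequent_value [Finite α] (f : ℕ → α) : ∃ c, ∀ N, ∃ n ≥ N, f n = c := by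
  obtain ⟨c, hc⟩ := Finite.exists_infinite_fiber f
  refine ⟨c, fun N => ?_⟩
  obtain ⟨n, hn, hNn⟩ := (infinite_coe_iff.1 hc).exists_gt N
  exact ⟨n, hNn.le, hn⟩

end Windows

theorem patLang_eq_range_pattern (x : Seq2) (S : Finset ℕ) :
    patLang x S = range (pattern x S) := by
  ext w
  exact ⟨fun ⟨m, h⟩ => ⟨m, (funext h).symm⟩, fun ⟨m, h⟩ => ⟨m, fun s => (congrFun h s).symm⟩⟩

theorem ncard_range_pattern_le_pstar (x : Seq2) (S : Finset ℕ) :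
    (range (pattern x S)).ncard ≤ pstar x S.card := by
  refine le_csSup ⟨2 ^ S.card, ?_⟩ ⟨S, rfl, by rw [patLang_eq_range_pattern]⟩
  rintro _ ⟨T, hT, rfl⟩
  calc (patLang x T).ncard ≤ (univ : Set (T → Fin 2)).ncard := ncard_le_ncard (subset_univ _)
    _ = 2 ^ S.card := by simp [ncard_univ, hT]

theorem NonSuperlinear.of_pstar {x : Seq2}
    (h : ∃ C : ℝ, ∀ N : ℕ, ∃ n : ℕ, N ≤ n ∧ (pstar x n : ℝ) ≤ C * n) : NonSuperlinear x := by
  obtain ⟨C, hC⟩ := h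
  refine ⟨⌈C⌉₊, fun N => ?_⟩
  obtain ⟨n, hn, hp⟩ := hC N
  refine ⟨n, hn, fun S hS => ?_⟩
  obtain ⟨T, hST, rfl⟩ := Infinite.exists_superset_card_eq S n hS
  have hrestrict := ncard_range_le_of_factorsThrough (f := pattern x T) (g := pattern x S)
    fun _ _ => pattern_eq_mono hST
  have hle : ((range (pattern x S)).ncard : ℝ) ≤ ⌈C⌉₊ * T.card := calc
    _ ≤ (pstar x T.card : ℝ) := mod_cast hrestrict.trans (ncard_range_pattern_le_pstar x T)
    _ ≤ C * T.card := hp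
    _ ≤ ⌈C⌉₊ * T.card := by gcongr; exact Nat.le_ceil C
  exact_mod_cast hle

section Gaps

theorem Recurrent.exists_ge {x : Seq2} (h : Recurrent x) (L N : ℕ) :
    ∃ M ≥ N, ∀ i < L, x i = x (M + i) := by
  induction N with
  | zero =>
    obtain ⟨M, -, hM⟩ := h L
    exact ⟨M, M.zero_le, hM⟩
  | succ N ih =>
    obtain ⟨M, hM, hret⟩ := ih
    obtain ⟨M', hM', hret'⟩ := h (L + M)
    refine ⟨M' + M, by lia, fun i hi => ?_⟩
    rw [hret i hi, hret' (M + i) (by lia), add_assoc]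

theorem Recurrent.exists_spaced_returns {x : Seq2} (h : Recurrent x) (L N : ℕ) :
    ∃ r : ℕ → ℕ, (∀ k, N ≤ r k) ∧ (∀ j k, j < k → r j + L ≤ r k) ∧
      ∀ k, ∀ i < L, x i = x (r k + i) := by
  choose f hfge hfret using h.exists_ge L
  let r (k : ℕ) : ℕ := Nat.rec (f N) (fun _ M => f (M + L)) k
  have hstep (k : ℕ) : r k + L ≤ r (k + 1) := hfge _
  have hmono : Monotone r := monotone_nat_of_le_succ fun k => by have := hstep k; lia
  refine ⟨r, fun k => (hfge N).trans (hmono k.zero_le), fun j k hjk => (hstep j).trans (hmono hjk),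
    fun k => ?_⟩
  cases k with
  | zero => exact hfret N
  | succ k => exact hfret _

/-- A block of `A` zeros starting at `v` and closed by a one at `v + A`. -/
def IsGap (b : Seq2) (v A : ℕ) : Prop := (∀ i < A, b (v + i) = 0) ∧ b (v + A) = 1

variable {b : Seq2} {C : ℕ}

theorem IsGap.suffix {v k A : ℕ} (h : IsGap b v (k + A)) : IsGap b (v + k) A :=
  ⟨fun i hi => by simpa only [add_assoc] using h.1 (k + i) (by lia),
    by simpa only [add_assoc] using h.2⟩

theorem IsGap.injective_pattern {v A : ℕ} (h : IsGap b v A) {S : Finset ℕ}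
    (hS : Finset.range (A + 1) ⊆ S) : InjOn (fun a => pattern b S (v + a)) (Iio A) := by
  have ne_of_lt {a a' : ℕ} (haa' : a < a') (ha' : a' < A) :
      pattern b S (v + a) ≠ pattern b S (v + a') := by
    intro heq
    have := pattern_eq_iff.1 heq (A - a') (hS (Finset.mem_range.2 (by lia)))
    rw [show v + a' + (A - a') = v + A by lia, h.2, add_assoc, h.1 _ (by lia)] at this
    exact absurd this (by decide)
  intro a ha a' ha' heq
  rcases lt_trichotomy a a' with hlt | rfl | hlt
  · exact absurd heq (ne_of_lt hlt ha')
  · rfl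
  · exact absurd heq.symm (ne_of_lt hlt ha)

theorem IsTame.card_le_of_isGap {S : Finset ℕ} (hS : IsTame C b S) {v A : ℕ} (h : IsGap b v A)
    (hAS : Finset.range (A + 1) ⊆ S) {G : Finset ℕ} (hG : ∀ a ∈ G, a < A) {u : ℕ}
    (hsplit : ∀ a ∈ G, u ∈ splitTimes b S (pattern b S (v + a))) : G.card ≤ C := by
  rw [← Finset.card_image_of_injective G (add_right_injective v)]
  refine hS.card_le (u := u) ?_ (by simpa using hsplit)
  rw [Finset.coe_image]
  exact ((h.injective_pattern hAS).mono hG).image_of_comp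

theorem exists_isGap (hrec : Recurrent b) (hone : b 0 = 1)
    (hgap : ∀ g, ∃ n, ∀ m, n ≤ m → m < n + g → b m = 0) (A : ℕ) : ∃ v, IsGap b v A := by
  classical
  obtain ⟨n, hn⟩ := hgap A
  have hex : ∃ m ≥ n + A, b m = 1 := by
    obtain ⟨M, hM, hret⟩ := hrec.exists_ge 1 (n + A)
    exact ⟨M, hM, (hret 0 one_pos).symm.trans hone⟩
  obtain ⟨hge, hval⟩ := Nat.find_spec hex
  refine ⟨Nat.find hex - A, fun i hi => ?_, by rwa [Nat.sub_add_cancel (by lia)]⟩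
  rcases lt_or_ge (Nat.find hex - A + i) (n + A) with hlt | hle
  · exact hn _ (by lia) hlt
  · have := Nat.find_min hex (m := Nat.find hex - A + i) (by lia)
    lia

theorem exists_card_ones_after_gap_le (hrec : Recurrent b) (hgap : ∀ A, ∃ v, IsGap b v A)
    (htame : CofinallyTame C b) (A : ℕ) :
    ∃ N, ∀ s, IsGap b s N → ∀ G : Finset ℕ, (∀ a ∈ G, a < A ∧ b (s + N + a) = 1) →
      G.card ≤ C := by
  obtain ⟨v, hv⟩ := hgap A
  obtain ⟨S, hAS, hS⟩ := htame (Finset.range (A + 1))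
  obtain ⟨M, hM, hret⟩ := hrec.exists_ge (v + A + S.sup id) (A + 1)
  refine ⟨v + M, fun s hs G hG => hS.card_le_of_isGap hv hAS (fun a ha => (hG a ha).1) (u := s) ?_⟩
  intro a ha
  obtain ⟨haA, hone⟩ := hG a ha
  refine ⟨v + a, M + (v + a), rfl, (pattern_eq_iff.2 fun t ht => ?_).symm, ?_⟩
  · have : t ≤ S.sup id := Finset.le_sup (f := id) ht
    rw [hret _ (by lia), add_assoc, add_assoc, add_assoc]
  · rw [show v + a + s = s + (v + a) by lia, hs.1 _ (by lia),
      show M + (v + a) + s = s + (v + M) + a by lia, hone]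
    decide

theorem exists_zero_block {o A L : ℕ}
    (hfew : ∀ G : Finset ℕ, (∀ a ∈ G, a < A ∧ b (o + a) = 1) → G.card ≤ C) {r : ℕ → ℕ}
    (hspaced : ∀ j k, j < k → r j + L ≤ r k) (hA : r C + L ≤ A) :
    ∃ k, ∀ i < L, b (o + (r k + i)) = 0 := by
  by_contra! hblock
  choose i hiL hi using hblock
  have hmono : StrictMono fun k => r k + i k := fun j k hjk => by
    have := hspaced j k hjk
    have := hiL j
    lia
  have hcard := hfew ((Finset.range (C + 1)).image fun k => r k + i k) fun a ha => by
    obtain ⟨k, hk, rfl⟩ := Finset.mem_image.1 ha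
    have hk : k ≤ C := Nat.lt_succ_iff.1 (Finset.mem_range.1 hk)
    have := hmono.monotone hk
    have := hiL C
    have := hi k
    lia
  rw [Finset.card_image_of_injective _ hmono.injective, Finset.card_range] at hcard
  lia

theorem exists_isGap_agreeing (hgap : ∀ A, ∃ v, IsGap b v A) (A R : ℕ) :
    ∃ v, IsGap b v A ∧ ∀ B, ∃ s v', IsGap b s B ∧ s + B = v' + A ∧
      ∀ i < R, b (v' + i) = b (v + i) := by
  choose g hg using fun N => hgap (N + A)
  -- Infinitely many of the gaps are followed by the same letters.
  obtain ⟨c, hc⟩ := exists_frequent_value fun N => pattern b (Finset.range R) (g N + N)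
  obtain ⟨N, -, hN⟩ := hc 0
  refine ⟨g N + N, (hg N).suffix, fun B => ?_⟩
  obtain ⟨N', hBN', hN'⟩ := hc B
  have hlong := hg N'
  rw [show N' + A = (N' + A - B) + B by lia] at hlong
  exact ⟨_, g N' + N', hlong.suffix, by lia,
    fun i hi => pattern_eq_iff.1 (hN'.trans hN.symm) i (Finset.mem_range.2 hi)⟩

theorem Recurrent.not_all_isGap (hrec : Recurrent b) (htame : CofinallyTame C b) (hone : b 0 = 1) :
    ¬ ∀ A, ∃ v, IsGap b v A := by
  intro hgap
  have hinf : {a | b a = 1}.Infinite := infinite_of_forall_exists_gt fun N => by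
    obtain ⟨M, hM, hret⟩ := hrec.exists_ge 1 (N + 1)
    exact ⟨M, (hret 0 one_pos).symm.trans hone, hM⟩
  obtain ⟨G, hG, hGcard⟩ := hinf.exists_subset_card_eq (C + 1)
  set A := G.sup id + 1
  have hGA : ∀ a ∈ G, a < A := fun a ha => Nat.lt_succ_of_le (Finset.le_sup (f := id) ha)
  obtain ⟨S, hAS, hS⟩ := htame (Finset.range (A + 1))
  obtain ⟨v, hv, hagree⟩ := exists_isGap_agreeing hgap A (A + S.sup id)
  obtain ⟨r, hrge, hspaced, hret⟩ := hrec.exists_spaced_returns A (v + A)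
  obtain ⟨B, hB⟩ := exists_card_ones_after_gap_le hrec hgap htame (r C + A)
  obtain ⟨s, v', hs, hsv', hv'⟩ := hagree B
  have hspaced' : ∀ i j, i < j → r i - (v + A) + A ≤ r j - (v + A) := fun i j hij => by
    have := hspaced i j hij
    have := hrge i
    lia
  obtain ⟨k, hk⟩ := exists_zero_block (hB s hs) hspaced' (by lia)
  -- At the time `r k - v` the ones of `G` recur after the gap at `v`, but not after that at `v'`.
  refine (hS.card_le_of_isGap hv hAS hGA (u := r k - v) fun a ha => ?_).not_gt (by lia)
  have hlt := hGA a ha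
  have := hrge k
  refine ⟨v + a, v' + a, rfl, pattern_eq_iff.2 fun t ht => ?_, ?_⟩
  · have : t ≤ S.sup id := Finset.le_sup (f := id) ht
    simpa only [add_assoc] using hv' (a + t) (by lia)
  · rw [show v + a + (r k - v) = r k + a by lia, ← hret k a hlt, hG ha,
      show v' + a + (r k - v) = s + B + (r k - (v + A) + a) by lia, hk a hlt]
    decide

theorem Recurrent.uniformlyRecurrent {x : Seq2} (hrec : Recurrent x) (hns : NonSuperlinear x) :
    UniformlyRecurrent x := by
  classical
  intro L
  by_contra hnot
  simp only [Syndetic, not_exists, not_forall] at hnot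
  let b : Seq2 := fun m => if ∀ i < L, x i = x (m + i) then 1 else 0
  have hbrec : Recurrent b := fun l => by
    obtain ⟨M, hM, hret⟩ := hrec (l + L)
    refine ⟨M, hM, fun m hm => if_congr (forall₂_congr fun i hi => ?_) rfl rfl⟩
    rw [hret (m + i) (by lia), add_assoc]
  have hbns : NonSuperlinear b := hns.of_block_code (L := L) fun m k h =>
    if_congr (forall₂_congr fun i hi => by rw [h i hi.le]) rfl rfl
  have hone : b 0 = 1 := if_pos fun i _ => by rw [zero_add]
  obtain ⟨C, htame⟩ := hbns.exists_cofinallyTame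
  refine hbrec.not_all_isGap htame hone (exists_isGap hbrec hone fun g => ?_)
  obtain ⟨n, hn⟩ := hnot (g + 1)
  exact ⟨n + 1, fun m hnm hmg => if_neg fun hret => hn m ⟨⟨by lia, hret⟩, by lia, by lia⟩⟩

end Gaps

section Density

open Filter Topology

open Classical in
/-- The density of a set of naturals along a fixed ultrafilter: a finitely additive
shift-invariant mean. -/
noncomputable def density (B : Set ℕ) : ℝ :=
  limUnder (hyperfilter ℕ : Filter ℕ) fun N => (Nat.count (· ∈ B) N : ℝ) / N

open Classical in
theorem tendsto_count_div_density (B : Set ℕ) :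
    Tendsto (fun N => (Nat.count (· ∈ B) N : ℝ) / N) (hyperfilter ℕ : Filter ℕ)
      (𝓝 (density B)) := by
  refine tendsto_nhds_limUnder ?_
  have hmem : ∀ N, (Nat.count (· ∈ B) N : ℝ) / N ∈ Icc (0 : ℝ) 1 := fun N =>
    ⟨by positivity, div_le_one_of_le₀ (mod_cast Nat.count_le (p := (· ∈ B))) (by positivity)⟩
  obtain ⟨a, -, ha⟩ := isCompact_Icc.ultrafilter_le_nhds
    ((hyperfilter ℕ).map fun N => (Nat.count (· ∈ B) N : ℝ) / N)
    (le_principal_iff.2 (mem_map.2 (Eventually.of_forall hmem)))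
  exact ⟨a, ha⟩

theorem density_nonneg (B : Set ℕ) : 0 ≤ density B :=
  ge_of_tendsto' (tendsto_count_div_density B) fun N => by positivity

theorem hyperfilter_le_atTop_nat : (hyperfilter ℕ : Filter ℕ) ≤ atTop :=
  hyperfilter_le_cofinite.trans Nat.cofinite_eq_atTop.le

theorem density_univ : density univ = 1 := by
  refine tendsto_nhds_unique (tendsto_count_div_density univ) (tendsto_const_nhds.congr' ?_)
  filter_upwards [hyperfilter_le_atTop_nat (eventually_gt_atTop 0)] with N hN
  simp [hN.ne']

variable {ι κ : Type*} {I : Finset ι} {J : Finset κ} {U : ι → Set ℕ} {V : κ → Set ℕ}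

open Classical in
theorem sum_density_le_sum_of_count_le (c : ℕ)
    (h : ∀ N, ∑ i ∈ I, Nat.count (· ∈ U i) N ≤ ∑ j ∈ J, Nat.count (· ∈ V j) N + c) :
    ∑ i ∈ I, density (U i) ≤ ∑ j ∈ J, density (V j) := by
  have hc : Tendsto (fun N : ℕ => (c : ℝ) / N) (hyperfilter ℕ : Filter ℕ) (𝓝 0) :=
    (tendsto_const_div_atTop_nhds_zero_nat _).mono_left hyperfilter_le_atTop_nat
  have hright := (tendsto_finsetSum J fun j _ => tendsto_count_div_density (V j)).add hc
  rw [add_zero] at hright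
  refine le_of_tendsto_of_tendsto'
    (tendsto_finsetSum I fun i _ => tendsto_count_div_density (U i)) hright fun N => ?_
  rw [← Finset.sum_div, ← Finset.sum_div, ← add_div]
  gcongr
  exact_mod_cast h N

open Classical in
theorem sum_density_le_sum
    (h : ∀ u, (I.filter (u ∈ U ·)).card ≤ (J.filter (u ∈ V ·)).card) :
    ∑ i ∈ I, density (U i) ≤ ∑ j ∈ J, density (V j) := by
  refine sum_density_le_sum_of_count_le 0 fun N => ?_
  induction N with
  | zero => simp
  | succ N ih =>
    simp only [Nat.count_succ, Finset.sum_add_distrib, ← Finset.card_filter]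
    rw [add_right_comm]
    exact Nat.add_le_add ih (h N)

theorem density_le_sum {W : Set ℕ} (h : ∀ u ∈ W, ∃ i ∈ I, u ∈ U i) :
    density W ≤ ∑ i ∈ I, density (U i) := by
  classical
  have := sum_density_le_sum (I := {()}) (U := fun _ => W) (J := I) (V := U) fun u => by
    by_cases hu : u ∈ W
    · obtain ⟨i, hi, hui⟩ := h u hu
      simpa [hu] using Finset.card_pos.2 ⟨i, Finset.mem_filter.2 ⟨hi, hui⟩⟩
    · simp [hu]
  simpa using this

open Classical in
theorem sum_density_le_mul {W : Set ℕ} {C : ℕ} (hUW : ∀ i ∈ I, U i ⊆ W)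
    (h : ∀ u, (I.filter (u ∈ U ·)).card ≤ C) : ∑ i ∈ I, density (U i) ≤ C * density W := by
  have := sum_density_le_sum (I := I) (U := U) (J := Finset.range C) (V := fun _ => W) fun u => by
    by_cases hu : u ∈ W
    · simpa [hu] using h u
    · rw [Finset.filter_false_of_mem fun i hi hui => hu (hUW i hi hui)]
      simp
  simpa using this

theorem density_mono {A B : Set ℕ} (h : A ⊆ B) : density A ≤ density B := by
  simpa using density_le_sum (I := {()}) (U := fun _ => B) (W := A) fun u hu => ⟨(), by simp, h hu⟩

theorem density_union_le (A B : Set ℕ) : density (A ∪ B) ≤ density A + density B := by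
  simpa using density_le_sum (I := Finset.univ) (U := fun i : Bool => bif i then A else B)
    (W := A ∪ B) fun u hu => hu.elim (fun h => ⟨true, by simp, h⟩) fun h => ⟨false, by simp, h⟩

theorem density_empty : density ∅ = 0 := by
  refine (density_le_sum (I := (∅ : Finset Unit)) (U := fun _ => ∅) ?_).antisymm (density_nonneg _)
  simp

theorem density_add_right (B : Set ℕ) (k : ℕ) : density {u | u + k ∈ B} = density B := by
  classical
  have hsplit (N : ℕ) :
      Nat.count (· ∈ B) (N + k) = Nat.count (· ∈ {u | u + k ∈ B}) N + Nat.count (· ∈ B) k :=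
    Nat.count_add' (· ∈ B) N k
  refine le_antisymm ?_ ?_
  · simpa using sum_density_le_sum_of_count_le (I := {()}) (J := {()})
      (U := fun _ => {u | u + k ∈ B}) (V := fun _ => B) k fun N => by
        have := Nat.count_add (· ∈ B) N k
        have := Nat.count_le (p := fun i => N + i ∈ B) (n := k)
        have := hsplit N
        simp only [Finset.sum_singleton]
        lia
  · simpa using sum_density_le_sum_of_count_le (I := {()}) (J := {()})
      (U := fun _ => B) (V := fun _ => {u | u + k ∈ B}) k fun N => by
        have := Nat.count_monotone (· ∈ B) (Nat.le_add_right N k)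
        have := Nat.count_le (p := (· ∈ B)) (n := k)
        have := hsplit N
        simp only [Finset.sum_singleton]
        lia

theorem Syndetic.density_pos {B : Set ℕ} (h : Syndetic B) : 0 < density B := by
  obtain ⟨g, hg⟩ := h
  have hcover := density_le_sum (I := Finset.range g) (U := fun k => {u | u + k ∈ B}) (W := univ)
    fun u _ => by
      obtain ⟨m, hm, hum, hmu⟩ := hg u
      refine ⟨m - u, Finset.mem_range.2 (by lia), ?_⟩
      rwa [mem_ofPred_eq, Nat.add_sub_cancel' hum]
  simp only [density_univ, density_add_right, Finset.sum_const, Finset.card_range,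
    nsmul_eq_mul] at hcover
  exact pos_of_mul_pos_right (one_pos.trans_le hcover) g.cast_nonneg

variable {α : Type*}

/-- The Besicovitch distance between the shifts of `x` by `m` and by `k`: the density of the
times at which they differ. -/
noncomputable def discrepancy (x : ℕ → α) (m k : ℕ) : ℝ := density {u | x (m + u) ≠ x (k + u)}

theorem discrepancy_self (x : ℕ → α) (m : ℕ) : discrepancy x m m = 0 := by
  simp [discrepancy, density_empty]

theorem discrepancy_comm (x : ℕ → α) (m k : ℕ) : discrepancy x m k = discrepancy x k m := by
  simp only [discrepancy, ne_comm]

theorem discrepancy_triangle (x : ℕ → α) (m k l : ℕ) :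
    discrepancy x m l ≤ discrepancy x m k + discrepancy x k l := by
  refine (density_mono fun u hu => ?_).trans (density_union_le _ _)
  by_contra hnot
  simp only [mem_union, mem_ofPred_eq, not_or, not_not] at hnot
  exact hu (hnot.1.trans hnot.2)

theorem discrepancy_add_right (x : ℕ → α) (m k a : ℕ) :
    discrepancy x (m + a) (k + a) = discrepancy x m k := by
  rw [discrepancy, discrepancy, ← density_add_right {u | x (m + u) ≠ x (k + u)} a]
  simp only [mem_ofPred_eq, add_assoc, add_comm a]

theorem IsTame.sum_density_splitTimes_le [Finite α] {C : ℕ} {x : ℕ → α} {S : Finset ℕ}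
    (hS : IsTame C x S) (I : Finset (S → α)) : ∑ w ∈ I, density (splitTimes x S w) ≤ C := by
  classical
  refine (sum_density_le_mul (C := C) (fun w _ => subset_univ _) fun u => ?_).trans_eq
    (by rw [density_univ, mul_one])
  rw [← ncard_coe_finset]
  refine (ncard_le_ncard ?_ (toFinite _)).trans (hS u)
  intro w hw
  exact (Finset.mem_filter.1 hw).2

end Density

section UniformRecurrence

theorem UniformlyRecurrent.exists_return {x : Seq2} (h : UniformlyRecurrent x) (L : ℕ) :
    ∃ g, ∀ v, ∃ M, v ≤ M ∧ M < v + g ∧ ∀ i < L, x i = x (M + i) := by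
  obtain ⟨g, hg⟩ := h L
  refine ⟨g, fun v => ?_⟩
  obtain ⟨M, ⟨-, hret⟩, hvM, hMv⟩ := hg v
  exact ⟨M, hvM, hMv, hret⟩

theorem UniformlyRecurrent.periodic_of_blocks {x : Seq2} (h : UniformlyRecurrent x) {p : ℕ}
    (hp : 1 ≤ p) (hblock : ∀ N, ∃ v, ∀ i < N, x (v + i) = x (v + (i + p))) : Periodic x := by
  refine ⟨p, hp, fun n => ?_⟩
  obtain ⟨g, hg⟩ := h.exists_return (n + p + 1)
  obtain ⟨v, hv⟩ := hblock (g + n)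
  obtain ⟨M, hvM, hMv, hret⟩ := hg v
  have hper := hv (M - v + n) (by lia)
  rw [show v + (M - v + n) = M + n by lia, show v + (M - v + n + p) = M + (n + p) by lia] at hper
  rw [hret n (by lia), hret (n + p) (by lia), hper]

theorem eq_add_mul_of_local_period {α : Type*} {y : ℕ → α} {d L : ℕ}
    (h : ∀ i < L, y i = y (i + d)) (k i : ℕ) (hi : i + k * d < L) : y i = y (i + k * d) := by
  induction k with
  | zero => rw [zero_mul, add_zero]
  | succ k ih =>
    rw [Nat.succ_mul] at hi ⊢
    rw [ih (by lia), h _ (by lia), add_assoc]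

theorem IsTame.ncard_large_split_le {C : ℕ} {x : Seq2} {S : Finset ℕ} (hS : IsTame C x S) {ε : ℝ}
    (hε : 0 < ε) : {w | ε ≤ density (splitTimes x S w)}.ncard ≤ ⌊C / ε⌋₊ := by
  classical
  rw [ncard_eq_toFinset_card', Nat.le_floor_iff (by positivity), le_div_iff₀ hε, ← nsmul_eq_mul]
  refine (Finset.card_nsmul_le_sum _ (fun w => density (splitTimes x S w)) ε fun w hw => ?_).trans
    (hS.sum_density_splitTimes_le _)
  simpa using hw

theorem exists_discrepancy_lt {x : Seq2} {C : ℕ} (hur : UniformlyRecurrent x)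
    (hper : ¬ Periodic x) (htame : CofinallyTame C x) {ε : ℝ} (hε : 0 < ε) :
    ∃ S, ∀ m k, pattern x S m = pattern x S k → discrepancy x m k < ε := by
  by_contra! hcon
  -- Only `Q` patterns of a tame window are split with density at least `ε`; if they were all that
  -- one sees at `Q + 1` consecutive positions, two would coincide and produce a local period.
  set Q := ⌊C / ε⌋₊
  refine hper (hur.periodic_of_blocks Q.factorial_pos fun N => ?_)
  obtain ⟨S, hNS, hS⟩ := htame (Finset.range (N + Q.factorial))
  obtain ⟨m, k, hmk, hfar⟩ := hcon (Finset.image₂ (· + ·) (Finset.range (Q + 1)) S)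
  have hagree : ∀ i ≤ Q, pattern x S (m + i) = pattern x S (k + i) := fun i hi =>
    pattern_eq_iff.2 fun s hs => by
      simpa only [add_assoc] using pattern_eq_iff.1 hmk (i + s)
        (Finset.mem_image₂_of_mem (Finset.mem_range.2 (by lia)) hs)
  have hlarge : ∀ i ≤ Q, ε ≤ density (splitTimes x S (pattern x S (m + i))) := fun i hi => by
    refine (hfar.trans_eq (discrepancy_add_right x m k i).symm).trans (density_mono fun u hu => ?_)
    exact ⟨m + i, k + i, rfl, (hagree i hi).symm, hu⟩
  have period_of_eq {a b : ℕ} (hab : a < b) (hb : b ≤ Q)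
      (heq : pattern x S (m + a) = pattern x S (m + b)) :
      ∃ v, ∀ i < N, x (v + i) = x (v + (i + Q.factorial)) := by
    obtain ⟨q, hq⟩ : b - a ∣ Q.factorial := Nat.dvd_factorial (by lia) (by lia)
    refine ⟨m + a, fun i hi => ?_⟩
    rw [hq, mul_comm]
    refine eq_add_mul_of_local_period (y := fun i => x (m + a + i)) (L := N + Q.factorial)
      (fun j hj => ?_) q i (by lia)
    have := pattern_eq_iff.1 heq j (hNS (Finset.mem_range.2 hj))
    rwa [show m + b + j = m + a + (j + (b - a)) by lia] at this
  obtain ⟨a, ha, b, hb, hne, heq⟩ := exists_ne_map_eq_of_ncard_lt_of_maps_to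
    (s := Iic Q) (t := {w | ε ≤ density (splitTimes x S w)}) (f := fun i => pattern x S (m + i))
    (by simpa [Nat.lt_succ_iff] using hS.ncard_large_split_le hε) hlarge (toFinite _)
  rcases hne.lt_or_gt with hlt | hlt
  · exact period_of_eq hlt hb heq
  · exact period_of_eq hlt ha heq.symm

end UniformRecurrence

section Cells

/-- The group generated by the differences between occurrences of the pattern `w`. -/
def cellDiffs {α : Type*} (x : ℕ → α) (S : Finset ℕ) (w : S → α) : AddSubgroup ℤ :=
  AddSubgroup.closure {d | ∃ m k : ℕ, pattern x S m = w ∧ pattern x S k = w ∧ d = m - k}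

/-- The residues modulo `t` on whose class `x` is not constant. -/
def holes (x : Seq2) (t : ℕ) : Set ℕ :=
  {j | j < t ∧ ∃ m₁ m₂ : ℕ, m₁ % t = j ∧ m₂ % t = j ∧ x m₁ ≠ x m₂}

theorem finite_holes (x : Seq2) (t : ℕ) : (holes x t).Finite :=
  (finite_Iio t).subset fun _ hj => hj.1

theorem pattern_add_return {α : Type*} {x : ℕ → α} {S : Finset ℕ} {r M : ℕ}
    (h : ∀ i < r + S.sup id + 1, x i = x (M + i)) : pattern x S (M + r) = pattern x S r :=
  pattern_eq_iff.2 fun s hs => by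
    have : s ≤ S.sup id := Finset.le_sup (f := id) hs
    rw [add_assoc, h (r + s) (by lia)]

theorem UniformlyRecurrent.syndetic_cell {x : Seq2} (hur : UniformlyRecurrent x) (S : Finset ℕ)
    (r : ℕ) : Syndetic {m | pattern x S m = pattern x S r} := by
  obtain ⟨g, hg⟩ := hur.exists_return (r + S.sup id + 1)
  refine ⟨g + r, fun n => ?_⟩
  obtain ⟨M, hnM, hMn, hret⟩ := hg n
  exact ⟨M + r, pattern_add_return hret, by lia, by lia⟩

theorem modEq_of_cellDiffs_le {α : Type*} {x : ℕ → α} {S : Finset ℕ} {w : S → α} {t m k : ℕ}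
    (h : cellDiffs x S w ≤ AddSubgroup.zmultiples (t : ℤ)) (hm : pattern x S m = w)
    (hk : pattern x S k = w) : m ≡ k [MOD t] :=
  Nat.modEq_iff_dvd.2 <| Int.mem_zmultiples_iff.1 <|
    h <| AddSubgroup.subset_closure ⟨k, m, hk, hm, rfl⟩

theorem eq_of_sub_mem_closure {α : Type*} {f : ℕ → α} {D : Set ℤ} {t j : ℕ}
    (hdvd : ∀ d ∈ D, (t : ℤ) ∣ d)
    (hD : ∀ d ∈ D, ∀ a b : ℕ, a % t = j → (b : ℤ) - a = d → f a = f b) {a b : ℕ}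
    (ha : a % t = j) (hab : (b : ℤ) - a ∈ AddSubgroup.closure D) : f a = f b := by
  have mod_eq {a b : ℕ} (h : (t : ℤ) ∣ b - a) (ha : a % t = j) : b % t = j :=
    Eq.trans (Nat.modEq_iff_dvd.2 h).symm ha
  suffices H : ∀ d ∈ AddSubgroup.closure D,
      (t : ℤ) ∣ d ∧ ∀ a b : ℕ, a % t = j → (b : ℤ) - a = d → f a = f b from
    (H _ hab).2 a b ha rfl
  intro d hd
  induction hd using AddSubgroup.closure_induction with
  | mem d hd => exact ⟨hdvd d hd, hD d hd⟩
  | zero => exact ⟨dvd_zero _, fun a b _ hab => by rw [show b = a by lia]⟩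
  | neg d _ ih =>
    exact ⟨ih.1.neg_right, fun a b ha hab =>
      (ih.2 b a (mod_eq (by rw [hab]; exact ih.1.neg_right) ha) (by lia)).symm⟩
  | add d e _ _ ihd ihe =>
    refine ⟨dvd_add ihd.1 ihe.1, fun a b ha hab => ?_⟩
    -- At least one of the two possible intermediate points is nonnegative.
    rcases le_total 0 ((a : ℤ) + d) with hd0 | hd0
    · lift (a : ℤ) + d to ℕ using hd0 with c hc
      have hca : (c : ℤ) - a = d := by lia
      exact (ihd.2 a c ha hca).trans (ihe.2 c b (mod_eq (hca ▸ ihd.1) ha) (by lia))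
    · lift (a : ℤ) + e to ℕ using (by lia) with c hc
      have hca : (c : ℤ) - a = e := by lia
      exact (ihe.2 a c ha hca).trans (ihd.2 c b (mod_eq (hca ▸ ihe.1) ha) (by lia))

theorem exists_shift_ne_of_mem_holes {x : Seq2} {S : Finset ℕ} {w : S → Fin 2} {t j : ℕ}
    (ht : cellDiffs x S w = AddSubgroup.zmultiples (t : ℤ)) (hj : j ∈ holes x t) :
    ∃ y h z, pattern x S y = w ∧ pattern x S (y + h) = w ∧ z % t = j ∧ x z ≠ x (z + h) := by
  obtain ⟨-, m₁, m₂, hm₁, hm₂, hne⟩ := hj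
  by_contra! hcon
  have hmem : ((m₂ : ℤ) - m₁) ∈ cellDiffs x S w := by
    rw [ht, Int.mem_zmultiples_iff, ← Nat.modEq_iff_dvd]
    exact hm₁.trans hm₂.symm
  refine hne (eq_of_sub_mem_closure (t := t) (j := j) ?_ ?_ hm₁ hmem)
  · rintro _ ⟨m, k, hm, hk, rfl⟩
    exact Nat.modEq_iff_dvd.1 (modEq_of_cellDiffs_le ht.le hk hm)
  · rintro _ ⟨m, k, hm, hk, rfl⟩ a b ha hab
    have hb : b % t = j :=
      Eq.trans (Nat.modEq_iff_dvd.2 <| hab ▸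
        Nat.modEq_iff_dvd.1 (modEq_of_cellDiffs_le ht.le hk hm)).symm ha
    rcases le_total k m with hkm | hmk
    · rw [show b = a + (m - k) by lia]
      exact hcon k (m - k) a hk (by rwa [Nat.add_sub_cancel' hkm]) ha
    · rw [show a = b + (k - m) by lia]
      exact (hcon m (k - m) b hm (by rwa [Nat.add_sub_cancel' hmk]) hb).symm

theorem density_le_of_reflection {Y V : Set ℕ} {c : ℕ}
    (h : ∀ N, ∃ z, N ≤ z ∧ z ≤ N + c ∧ ∀ y ∈ Y, ∀ u, y + u = z → u ∈ V) :
    density Y ≤ density V := by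
  classical
  have hcount (N : ℕ) : Nat.count (· ∈ Y) N ≤ Nat.count (· ∈ V) N + (c + 1) := by
    obtain ⟨z, hNz, hzN, hz⟩ := h N
    calc Nat.count (· ∈ Y) N ≤ Nat.count (· ∈ V) (N + (c + 1)) := by
          simp only [Nat.count_eq_card_filter_range]
          refine Finset.card_le_card_of_injOn (z - ·) (fun y hy => ?_) fun a ha b hb hab => ?_
          · simp only [Finset.coe_filter, Finset.mem_range, mem_ofPred_eq] at hy ⊢
            exact ⟨by lia, hz y hy.2 _ (by lia)⟩
          · simp only [Finset.coe_filter, Finset.mem_range, mem_ofPred_eq] at ha hb hab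
            lia
      _ ≤ Nat.count (· ∈ V) N + (c + 1) := by
          rw [Nat.count_add]
          gcongr
          exact Nat.count_le _
  simpa using sum_density_le_sum_of_count_le (I := {()}) (J := {()}) (U := fun _ => Y)
    (V := fun _ => V) (c + 1) (by simpa using hcount)

theorem UniformlyRecurrent.density_cell_le {x : Seq2} (hur : UniformlyRecurrent x) {S : Finset ℕ}
    {r t j : ℕ} (ht : cellDiffs x S (pattern x S r) = AddSubgroup.zmultiples (t : ℤ))
    (hj : j ∈ holes x t) :
    density {m | pattern x S m = pattern x S r} ≤
      2 * density (splitTimes x S (pattern x S r) ∩ {u | (u + r) % t = j}) := by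
  obtain ⟨y₀, h, z₀, hy₀, hy₀h, hz₀, hne⟩ := exists_shift_ne_of_mem_holes ht hj
  set V := splitTimes x S (pattern x S r) ∩ {u | (u + r) % t = j}
  obtain ⟨g, hg⟩ := hur.exists_return (z₀ + h + (r + S.sup id) + 1)
  have hbound : density {m | pattern x S m = pattern x S r} ≤ density (V ∪ {u | u + h ∈ V}) := by
    refine density_le_of_reflection (c := g + z₀) fun N => ?_
    obtain ⟨M, hNM, hMN, hret⟩ := hg N
    refine ⟨M + z₀, by lia, by lia, fun y hy u hyu => ?_⟩
    have hM : M + r ≡ r [MOD t] :=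
      modEq_of_cellDiffs_le ht.le (pattern_add_return fun i hi => hret i (by lia)) rfl
    have hclass : (u + r) % t = j := by
      have h₁ : u + r ≡ y + u [MOD t] := by
        rw [add_comm y]
        exact (modEq_of_cellDiffs_le ht.le rfl hy).add_left u
      have h₂ : M + z₀ ≡ z₀ [MOD t] := by
        have : M ≡ 0 [MOD t] := Nat.ModEq.add_right_cancel' r (by simpa using hM)
        simpa using this.add_right z₀
      exact Eq.trans (h₁.trans (hyu ▸ h₂)) hz₀
    have hh : h ≡ 0 [MOD t] :=
      Nat.ModEq.add_left_cancel' y₀ (modEq_of_cellDiffs_le ht.le hy₀h hy₀)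
    -- If neither `u` nor `u + h` splits the cell, then `x` agrees at `z`, `y₀ + h + u` and `z + h`.
    by_cases hu : u ∈ splitTimes x S (pattern x S r)
    · exact Or.inl ⟨hu, hclass⟩
    · refine Or.inr ⟨⟨y, y₀, hy, hy₀, fun heq => hne ?_⟩, ?_⟩
      · have hnot : x (y + u) = x (y₀ + h + u) :=
          not_not.1 fun hdiff => hu ⟨y, y₀ + h, hy, hy₀h, hdiff⟩
        rw [hret z₀ (by lia), hret (z₀ + h) (by lia), ← add_assoc, ← hyu, hnot, add_assoc y u h,
          heq, add_right_comm, add_assoc]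
      · have : u + h + r ≡ u + r [MOD t] := by simpa using (hh.add_left u).add_right r
        exact Eq.trans this hclass
  calc _ ≤ _ := hbound
    _ ≤ density V + density {u | u + h ∈ V} := density_union_le _ _
    _ = 2 * density V := by rw [density_add_right, two_mul]

/-- The periods along which the Toeplitz structure of `x` is built: `x` has at most `2 * C` holes
modulo `t`, and a suitable window recognizes positions modulo `t`. -/
structure IsGoodPeriod (C : ℕ) (x : Seq2) (t : ℕ) : Prop where
  pos : 1 ≤ t
  ncard_holes_le : (holes x t).ncard ≤ 2 * C
  recognizable : ∃ S, ∀ m k, pattern x S m = pattern x S k → m ≡ k [MOD t]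

theorem UniformlyRecurrent.exists_cellDiffs_eq {x : Seq2} (hur : UniformlyRecurrent x)
    (S : Finset ℕ) (r : ℕ) :
    ∃ t : ℕ, 1 ≤ t ∧ cellDiffs x S (pattern x S r) = AddSubgroup.zmultiples (t : ℤ) := by
  obtain ⟨a, ha⟩ := Int.subgroup_cyclic (cellDiffs x S (pattern x S r))
  rw [← AddSubgroup.zmultiples_eq_closure, ← Int.zmultiples_natAbs] at ha
  refine ⟨a.natAbs, Nat.one_le_iff_ne_zero.2 fun h0 => ?_, ha⟩
  obtain ⟨g, hg⟩ := hur.syndetic_cell S r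
  obtain ⟨m, hm, hrm, -⟩ := hg (r + 1)
  have := modEq_of_cellDiffs_le ha.le hm rfl
  rw [h0, Nat.modEq_zero_iff] at this
  lia

theorem UniformlyRecurrent.recognizable_of_cellDiffs_le {x : Seq2} (hur : UniformlyRecurrent x)
    {S : Finset ℕ} {r t : ℕ}
    (ht : cellDiffs x S (pattern x S r) ≤ AddSubgroup.zmultiples (t : ℤ)) :
    ∃ S, ∀ m k, pattern x S m = pattern x S k → m ≡ k [MOD t] := by
  obtain ⟨g, hg⟩ := hur.exists_return (r + S.sup id + 1)
  refine ⟨Finset.range (g + (r + S.sup id + 1)), fun m k hmk => ?_⟩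
  obtain ⟨M, hmM, hMm, hret⟩ := hg m
  obtain ⟨d, rfl⟩ := Nat.exists_eq_add_of_le hmM
  have hret' : ∀ i < r + S.sup id + 1, x i = x (k + d + i) := fun i hi => by
    rw [hret i hi, add_assoc, add_assoc]
    exact pattern_eq_iff.1 hmk (d + i) (Finset.mem_range.2 (by lia))
  have := modEq_of_cellDiffs_le ht (pattern_add_return hret) (pattern_add_return hret')
  exact (this.add_right_cancel' r).add_right_cancel' d

theorem IsTame.exists_split_le_mul_cell {x : Seq2} {C : ℕ} {S : Finset ℕ} (hS : IsTame C x S) :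
    ∃ r, density (splitTimes x S (pattern x S r)) ≤
      C * density {m | pattern x S m = pattern x S r} := by
  classical
  set W : Finset (S → Fin 2) := (range (pattern x S)).toFinset
  have hcover : (1 : ℝ) ≤ ∑ w ∈ W, density {m | pattern x S m = w} :=
    density_univ.symm.trans_le (density_le_sum fun u _ => ⟨pattern x S u, by simp [W], rfl⟩)
  obtain ⟨w, hw, hle⟩ := Finset.exists_le_of_sum_le
    (s := W) (f := fun w => density (splitTimes x S w))
    (g := fun w => C * density {m | pattern x S m = w}) ⟨pattern x S 0, by simp [W]⟩ <| by
      rw [← Finset.mul_sum]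
      exact (hS.sum_density_splitTimes_le W).trans (le_mul_of_one_le_right C.cast_nonneg hcover)
  obtain ⟨r, rfl⟩ := (Set.mem_toFinset.1 hw : w ∈ range (pattern x S))
  exact ⟨r, hle⟩

theorem IsTame.exists_isGoodPeriod {x : Seq2} {C : ℕ} {S : Finset ℕ} (hS : IsTame C x S)
    (hur : UniformlyRecurrent x) : ∃ t r, IsGoodPeriod C x t ∧
      cellDiffs x S (pattern x S r) = AddSubgroup.zmultiples (t : ℤ) := by
  classical
  obtain ⟨r, hr⟩ := hS.exists_split_le_mul_cell
  obtain ⟨t, ht1, ht⟩ := hur.exists_cellDiffs_eq S r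
  refine ⟨t, r, ⟨ht1, ?_, hur.recognizable_of_cellDiffs_le ht.le⟩, ht⟩
  set δ := density {m | pattern x S m = pattern x S r}
  have hδ : 0 < δ := (hur.syndetic_cell S r).density_pos
  set H := (finite_holes x t).toFinset
  have hclasses : ∑ j ∈ H, density (splitTimes x S (pattern x S r) ∩ {u | (u + r) % t = j}) ≤
      density (splitTimes x S (pattern x S r)) := by
    simpa using sum_density_le_mul (C := 1) (fun j _ => inter_subset_left) fun u => by
      rw [Finset.card_le_one]
      intro a ha b hb
      simp only [Finset.mem_filter, mem_inter_iff, mem_ofPred_eq] at ha hb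
      exact ha.2.2.symm.trans hb.2.2
  have hH : (H.card : ℝ) * δ ≤ (2 * C : ℕ) * δ := by
    calc (H.card : ℝ) * δ = ∑ _ ∈ H, δ := by rw [Finset.sum_const, nsmul_eq_mul]
      _ ≤ ∑ j ∈ H, 2 * density (splitTimes x S (pattern x S r) ∩ {u | (u + r) % t = j}) :=
        Finset.sum_le_sum fun j hj => hur.density_cell_le ht ((finite_holes x t).mem_toFinset.1 hj)
      _ ≤ 2 * density (splitTimes x S (pattern x S r)) := by rw [← Finset.mul_sum]; gcongr
      _ ≤ 2 * (C * δ) := by gcongr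
      _ = (2 * C : ℕ) * δ := by push_cast; ring
  rw [ncard_eq_toFinset_card _ (finite_holes x t)]
  exact_mod_cast le_of_mul_le_mul_right hH hδ

end Cells

section Toeplitz

open Filter Topology

theorem exists_strictMono_dvd_chain {P : ℕ → Prop} {t₀ : ℕ} (h₀ : P t₀)
    (h : ∀ t, P t → ∃ t', t < t' ∧ t ∣ t' ∧ P t') :
    ∃ n : ℕ → ℕ, StrictMono n ∧ (∀ k l, k ≤ l → n k ∣ n l) ∧ ∀ k, P (n k) := by
  choose! next hlt hdvd hP using h
  have hn (k : ℕ) : P (next^[k] t₀) := by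
    induction k with
    | zero => exact h₀
    | succ k ih => rw [Function.iterate_succ_apply']; exact hP _ ih
  refine ⟨fun k => next^[k] t₀, strictMono_nat_of_lt_succ fun k => ?_, fun k l hkl => ?_, hn⟩
  · rw [Function.iterate_succ_apply']; exact hlt _ (hn k)
  · induction l, hkl using Nat.le_induction with
    | base => exact dvd_rfl
    | succ l _ ih =>
      refine ih.trans ?_
      dsimp only
      rw [Function.iterate_succ_apply']
      exact hdvd _ (hn l)

variable {x : Seq2} {n : ℕ → ℕ} {B : ℕ}

theorem finite_persistent_holes (hn : StrictMono n) (hB : ∀ k, (holes x (n k)).ncard ≤ B) :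
    {a | ∀ k, a % n k ∈ holes x (n k)}.Finite := by
  by_contra hinf
  obtain ⟨F, hF, hcard⟩ := Set.Infinite.exists_subset_card_eq hinf (B + 1)
  set k := F.sup id + 1
  have hsub : (F : Set ℕ) ⊆ holes x (n k) := fun a ha => by
    have hak : a < n k :=
      (Nat.lt_succ_of_le (Finset.le_sup (f := id) ha)).trans_le (hn.le_apply (x := k))
    simpa only [Nat.mod_eq_of_lt hak] using hF ha k
  have := ncard_le_ncard hsub (finite_holes _ _)
  rw [ncard_coe_finset] at this
  have := hB k
  lia

theorem add_mod_mem_holes {t : ℕ} (ht : 1 ≤ t) {M a b : ℕ} (hab : a % t = b % t)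
    (hne : x (M + a) ≠ x (M + b)) : (M + b) % t ∈ holes x t :=
  ⟨Nat.mod_lt _ ht, M + a, M + b, Nat.ModEq.add_left M hab, rfl, hne⟩

theorem ncard_holes_shift_le {t : ℕ} (ht : 1 ≤ t) (M : ℕ) :
    (holes (fun i => x (M + i)) t).ncard ≤ (holes x t).ncard := by
  refine ncard_le_ncard_of_injOn (fun j => (M + j) % t) ?_ ?_ (finite_holes _ _)
  · rintro j ⟨hj, m₁, m₂, hm₁, rfl, hne⟩
    simpa using add_mod_mem_holes ht hm₁ hne
  · intro a ha b hb hab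
    exact (Nat.ModEq.add_left_cancel' M hab).eq_of_lt_of_lt ha.1 hb.1

theorem UniformlyRecurrent.nonempty_holes_shift (hur : UniformlyRecurrent x)
    (hper : ¬ Periodic x) {t : ℕ} (ht : 1 ≤ t) (M : ℕ) :
    (holes (fun i => x (M + i)) t).Nonempty := by
  by_contra hempty
  refine hper (hur.periodic_of_blocks ht fun N => ⟨M, fun i _ => ?_⟩)
  by_contra hne
  exact hempty ⟨i % t, Nat.mod_lt _ ht, i, i + t, rfl, Nat.add_mod_right i t, hne⟩

theorem exists_mHoleToeplitz {z : Seq2} (hpos : ∀ k, 1 ≤ n k) (hn : StrictMono n)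
    (hdvd : ∀ k l, k ≤ l → n k ∣ n l) (hconst : ∀ i, ∃ k, ∀ m, m % n k = i % n k → z m = z i)
    (hB : ∀ k, (holes z (n k)).ncard ≤ B) (hne : ∀ k, (holes z (n k)).Nonempty) :
    ∃ m ≥ 1, MHoleToeplitz m z := by
  obtain ⟨c, hc⟩ := exists_frequent_value fun k => (⟨_, Nat.lt_succ_of_le (hB k)⟩ : Fin (B + 1))
  obtain ⟨φ, hφ, hφc⟩ := Nat.exists_strictMono_subsequence
    (P := fun k => (holes z (n k)).ncard = c) fun N => by
      obtain ⟨k, hk, rfl⟩ := hc (N + 1)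
      exact ⟨k, hk, rfl⟩
  refine ⟨c, ?_, fun k => n (φ k), ⟨fun k => ⟨hpos _, hdvd _ _ (hφ k.lt_succ_self).le,
    hn (hφ k.lt_succ_self)⟩, fun i => ?_⟩, hφc⟩
  · rw [← hφc 0]
    exact (ncard_pos (finite_holes _ _)).2 (hne _)
  · obtain ⟨k, hk⟩ := hconst i
    exact ⟨k, fun m hm => hk m (Nat.ModEq.of_dvd (hdvd k (φ k) hφ.le_apply) hm)⟩

theorem Recurrent.mem_orbitClosure_shift (hrec : Recurrent x) (M : ℕ) :
    x ∈ orbitClosure fun i => x (M + i) := by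
  choose R hMR hret using fun L => hrec.exists_ge L M
  refine mem_closure_of_tendsto (f := fun L i => x (M + (R L - M + i))) (b := atTop) ?_
    (Eventually.of_forall fun L => ⟨R L - M, rfl⟩)
  refine tendsto_pi_nhds.2 fun i => tendsto_const_nhds.congr' ?_
  filter_upwards [eventually_gt_atTop i] with L hL
  rw [hret L i hL, ← add_assoc, Nat.add_sub_cancel' (hMR L)]

theorem exists_toeplitz_of_unbounded_isGoodPeriod {C : ℕ} (hrec : Recurrent x)
    (hur : UniformlyRecurrent x) (hper : ¬ Periodic x) {t₀ : ℕ} (ht₀ : IsGoodPeriod C x t₀)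
    (h : ∀ t, IsGoodPeriod C x t → ∃ t', t < t' ∧ t ∣ t' ∧ IsGoodPeriod C x t') :
    ∃ m, 1 ≤ m ∧ ∃ z, MHoleToeplitz m z ∧ x ∈ orbitClosure z := by
  obtain ⟨n, hn, hdvd, hgood⟩ := exists_strictMono_dvd_chain ht₀ h
  have hB k := (hgood k).ncard_holes_le
  obtain ⟨M, hM⟩ := (finite_persistent_holes hn hB).bddAbove
  have hconst (i : ℕ) : ∃ k, ∀ m, m % n k = i % n k → x (M + 1 + m) = x (M + 1 + i) := by
    by_contra! hcon
    refine (Nat.lt_succ_of_le (Nat.le_add_right M i)).not_ge (?_ : M + i + 1 ≤ M)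
    rw [add_right_comm]
    refine hM fun k => ?_
    obtain ⟨m, hm, hne⟩ := hcon k
    exact add_mod_mem_holes (hgood k).pos hm hne
  obtain ⟨m, hm, hz⟩ := exists_mHoleToeplitz (fun k => (hgood k).pos) hn hdvd hconst
    (fun k => (ncard_holes_shift_le (hgood k).pos _).trans (hB k))
    fun k => hur.nonempty_holes_shift hper (hgood k).pos _
  exact ⟨m, hm, _, hz, hrec.mem_orbitClosure_shift _⟩

/-- `x` has a largest recognizable period `K`, and this period is generated by the recurrences of
arbitrarily long patterns: the alternative to the Toeplitz case. -/
structure IsMaximalPeriod (x : Seq2) (K : ℕ) : Prop where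
  pos : 1 ≤ K
  recognizable : ∃ S, ∀ m k, pattern x S m = pattern x S k → m ≡ k [MOD K]
  generated : ∀ S₀, ∃ S, S₀ ⊆ S ∧ ∃ w, (K : ℤ) ∈ cellDiffs x S w

theorem exists_toeplitz_or_isMaximalPeriod {C : ℕ} (hrec : Recurrent x)
    (hur : UniformlyRecurrent x) (hper : ¬ Periodic x) (htame : CofinallyTame C x) :
    (∃ m, 1 ≤ m ∧ ∃ z, MHoleToeplitz m z ∧ x ∈ orbitClosure z) ∨ ∃ K, IsMaximalPeriod x K := by
  by_cases! h : ∀ t, IsGoodPeriod C x t → ∃ t', t < t' ∧ t ∣ t' ∧ IsGoodPeriod C x t'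
  · obtain ⟨S, -, hS⟩ := htame ∅
    obtain ⟨t, -, ht, -⟩ := hS.exists_isGoodPeriod hur
    exact Or.inl (exists_toeplitz_of_unbounded_isGoodPeriod hrec hur hper ht h)
  obtain ⟨K, hK, hmax⟩ := h
  obtain ⟨S₁, hS₁⟩ := hK.recognizable
  refine Or.inr ⟨K, hK.pos, ⟨S₁, hS₁⟩, fun S₀ => ?_⟩
  obtain ⟨S, hSS, hS⟩ := htame (S₀ ∪ S₁)
  obtain ⟨t, r, ht, hgen⟩ := hS.exists_isGoodPeriod hur
  have hKt : K ∣ t := by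
    have hle : cellDiffs x S (pattern x S r) ≤ AddSubgroup.zmultiples (K : ℤ) := by
      refine (AddSubgroup.closure_le _).2 ?_
      rintro _ ⟨m, k, hm, hk, rfl⟩
      exact Int.mem_zmultiples_iff.2 (Nat.modEq_iff_dvd.1 (hS₁ k m
        (pattern_eq_mono (Finset.union_subset_right hSS) (hk.trans hm.symm))))
    rw [hgen, AddSubgroup.zmultiples_le, Int.mem_zmultiples_iff] at hle
    exact_mod_cast hle
  have hKeq : t = K := by
    by_contra hne
    exact hmax t ((Nat.le_of_dvd ht.pos hKt).lt_of_ne' hne) hKt ht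
  refine ⟨S, Finset.union_subset_left hSS, pattern x S r, ?_⟩
  rw [hgen, hKeq]
  exact AddSubgroup.mem_zmultiples _

end Toeplitz

section Model

open Filter Topology

universe u

theorem exists_compact_completion {G : Type u} [AddCommGroup G] (p : AddGroupSeminorm G)
    (hp : ∀ ε > 0, ∃ F : Set G, F.Finite ∧ ∀ g, ∃ f ∈ F, p (g - f) < ε) :
    ∃ (H : Type u) (_ : NormedAddCommGroup H) (_ : CompactSpace H) (ι : G →+ H),
      DenseRange ι ∧ ∀ g, ‖ι g‖ = p g := by
  let _ := p.toSeminormedAddCommGroup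
  have htb : TotallyBounded (univ : Set G) := Metric.totallyBounded_iff.2 fun ε hε => by
    obtain ⟨F, hF, hcover⟩ := hp ε hε
    refine ⟨F, hF, fun g _ => ?_⟩
    obtain ⟨f, hf, hgf⟩ := hcover g
    exact mem_biUnion hf (by rwa [Metric.mem_ball, dist_eq_norm])
  have hdense : DenseRange ((↑) : G → UniformSpace.Completion G) :=
    UniformSpace.Completion.denseRange_coe
  have htb' := (htb.image (UniformSpace.Completion.uniformContinuous_coe G)).closure
  rw [image_univ, hdense.closure_eq] at htb'
  exact ⟨UniformSpace.Completion G, inferInstance,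
    ⟨isCompact_iff_totallyBounded_isComplete.2 ⟨htb', isClosed_univ.isComplete⟩⟩,
    (UniformSpace.Completion.toCompl : G →+ UniformSpace.Completion G), hdense,
    UniformSpace.Completion.norm_coe⟩

theorem preconnectedSpace_of_addSubgroup_eq_top {H : Type*} [AddGroup H] [TopologicalSpace H]
    [IsTopologicalAddGroup H] [CompactSpace H]
    (h : ∀ U : AddSubgroup H, IsOpen (U : Set H) → U = ⊤) : PreconnectedSpace H := by
  have eq_univ {W : Set H} (hW : IsClopen W) (h0 : 0 ∈ W) : W = univ := by
    obtain ⟨U, hU⟩ := IsTopologicalAddGroup.exist_openAddSubgroup_sub_clopen_nhds_of_zero hW h0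
    have htop := h U.toAddSubgroup U.isOpen
    exact univ_subset_iff.1 fun z _ => hU (htop ▸ AddSubgroup.mem_top z : z ∈ U.toAddSubgroup)
  refine preconnectedSpace_iff_clopen.2 fun W hW => ?_
  by_cases h0 : 0 ∈ W
  · exact Or.inr (eq_univ hW h0)
  · exact Or.inl (compl_univ_iff.1 (eq_univ hW.compl h0))

variable {x : Seq2} {C K : ℕ}

theorem discrepancy_natAbs {α : Type*} (x : ℕ → α) {k : ℤ} {m m' : ℕ}
    (h : (m : ℤ) - m' = K * k) : discrepancy x 0 (K * k.natAbs) = discrepancy x m m' := by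
  have hK : K * k.natAbs = ((m : ℤ) - m').natAbs := by rw [h, Int.natAbs_mul, Int.natAbs_natCast]
  rcases le_total m' m with hle | hle
  · rw [discrepancy_comm x m m', ← discrepancy_add_right x 0 _ m', zero_add, hK]
    congr 1
    lia
  · rw [← discrepancy_add_right x 0 _ m, zero_add, hK]
    congr 1
    lia

/-- The discrepancy between two shifts of `x` whose positions differ by `K * k`, as a seminorm of
`k`. -/
noncomputable def returnSeminorm {α : Type*} (x : ℕ → α) (K : ℕ) : AddGroupSeminorm ℤ where
  toFun k := discrepancy x 0 (K * k.natAbs)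
  map_zero' := by simp [discrepancy_self]
  neg' k := by simp
  add_le' k l := by
    obtain ⟨a, b, c, rfl, rfl⟩ : ∃ a b c : ℕ, (a : ℤ) - b = k ∧ (b : ℤ) - c = l :=
      ⟨(k.natAbs + l.natAbs + k).toNat, k.natAbs + l.natAbs, (k.natAbs + l.natAbs - l).toNat,
        by lia, by lia⟩
    have hak : ((K * a : ℕ) : ℤ) - (K * b : ℕ) = K * (a - b) := by push_cast; ring
    have hcl : ((K * b : ℕ) : ℤ) - (K * c : ℕ) = K * (b - c) := by push_cast; ring
    have hac : ((K * a : ℕ) : ℤ) - (K * c : ℕ) = K * (a - b + (b - c)) := by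
      linear_combination hak + hcl
    rw [discrepancy_natAbs x hac, discrepancy_natAbs x hak, discrepancy_natAbs x hcl]
    exact discrepancy_triangle x _ _ _

theorem returnSeminorm_eq {α : Type*} (x : ℕ → α) {k : ℤ} {m m' : ℕ}
    (h : (m : ℤ) - m' = K * k) : returnSeminorm x K k = discrepancy x m m' :=
  discrepancy_natAbs x h

theorem discrepancy_pos (hur : UniformlyRecurrent x) (hper : ¬ Periodic x) {p : ℕ} (hp : 1 ≤ p) :
    0 < discrepancy x 0 p := by
  obtain ⟨u, hu⟩ : ∃ u, x (u + p) ≠ x u := by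
    by_contra! hcon
    exact hper ⟨p, hp, hcon⟩
  refine Syndetic.density_pos ?_
  obtain ⟨g, hg⟩ := hur.exists_return (u + p + 1)
  refine ⟨g + u, fun n => ?_⟩
  obtain ⟨M, hnM, hMg, hret⟩ := hg n
  refine ⟨M + u, ?_, by lia, by lia⟩
  have hMu : p + (M + u) = M + (u + p) := by lia
  rw [mem_ofPred_eq, zero_add, hMu, ← hret u (by lia), ← hret (u + p) (by lia)]
  exact hu.symm

theorem returnSeminorm_totallyBounded {α : Type*} [Finite α] {x : ℕ → α}
    (hx : ∀ ε > 0, ∃ S, ∀ m k, pattern x S m = pattern x S k → discrepancy x m k < ε)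
    {ε : ℝ} (hε : 0 < ε) :
    ∃ F : Set ℤ, F.Finite ∧ ∀ k, ∃ f ∈ F, returnSeminorm x K (k - f) < ε := by
  obtain ⟨S, hS⟩ := hx ε hε
  let rep : range (fun n => pattern x S (K * n)) → ℕ := rangeSplitting _
  have hrep (n : ℕ) : ∃ i, returnSeminorm x K (n - rep i) < ε := by
    let i : range (fun n => pattern x S (K * n)) := ⟨_, mem_range_self n⟩
    have hi : pattern x S (K * n) = pattern x S (K * rep i) := (apply_rangeSplitting _ i).symm
    exact ⟨i, (returnSeminorm_eq x (by push_cast; ring)).trans_lt (hS _ _ hi)⟩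
  refine ⟨range (fun i => (rep i : ℤ)) ∪ range (fun i => -(rep i : ℤ)),
    (finite_range _).union (finite_range _), fun k => ?_⟩
  obtain ⟨i, hi⟩ := hrep k.natAbs
  rcases Int.natAbs_eq k with hk | hk
  · exact ⟨rep i, Or.inl (mem_range_self i), by rwa [hk]⟩
  · refine ⟨-(rep i : ℤ), Or.inr (mem_range_self i), ?_⟩
    rwa [hk, neg_sub_neg, ← map_neg_eq_map, neg_sub]

/-- A realization `ι` of the integers in a metric group, such that the translations by multiples
of `K` act on `x`, up to Besicovitch distance, as translations by `ι` act on the group. -/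
structure IsBesicovitchModel {H : Type*} [NormedAddCommGroup H] (x : Seq2) (K : ℕ) (ι : ℤ →+ H) :
    Prop where
  denseRange : DenseRange ι
  injective : Function.Injective ι
  norm_eq : ∀ ⦃k : ℤ⦄ ⦃m m' : ℕ⦄, (m : ℤ) - m' = K * k → ‖ι k‖ = discrepancy x m m'
  window : ∀ ε > 0, ∃ S, ∀ m m' : ℕ, pattern x S m = pattern x S m' →
    ∃ k : ℤ, (m : ℤ) - m' = K * k ∧ ‖ι k‖ < ε

theorem IsMaximalPeriod.exists_isBesicovitchModel (hK : IsMaximalPeriod x K)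
    (hur : UniformlyRecurrent x) (hper : ¬ Periodic x) (htame : CofinallyTame C x) :
    ∃ (H : Type) (_ : NormedAddCommGroup H) (_ : CompactSpace H) (ι : ℤ →+ H),
      IsBesicovitchModel x K ι := by
  have hdisc (ε : ℝ) (hε : ε > 0) := exists_discrepancy_lt hur hper htame hε
  obtain ⟨H, _, _, ι, hdense, hnorm⟩ :=
    exists_compact_completion (returnSeminorm x K) fun _ => returnSeminorm_totallyBounded hdisc
  have hnorm_eq ⦃k : ℤ⦄ ⦃m m' : ℕ⦄ (h : (m : ℤ) - m' = K * k) : ‖ι k‖ = discrepancy x m m' :=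
    (hnorm k).trans (returnSeminorm_eq x h)
  refine ⟨H, _, ‹_›, ι, hdense, ?_, hnorm_eq, fun ε hε => ?_⟩
  · refine (injective_iff_map_eq_zero ι).2 fun k hk => ?_
    by_contra hk0
    have hpos := discrepancy_pos hur hper
      (Nat.mul_pos hK.pos (Int.natAbs_pos.2 hk0) : 1 ≤ K * k.natAbs)
    exact hpos.ne' ((hnorm k).symm.trans (by rw [hk, norm_zero]))
  · obtain ⟨S₀, hS₀⟩ := hdisc ε hε
    obtain ⟨S₁, hS₁⟩ := hK.recognizable
    refine ⟨S₀ ∪ S₁, fun m m' h => ?_⟩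
    obtain ⟨k, hk⟩ := (hS₁ m' m (pattern_eq_mono Finset.subset_union_right h.symm)).dvd
    exact ⟨k, hk, (hnorm_eq hk).trans_lt
      (hS₀ m m' (pattern_eq_mono Finset.subset_union_left h))⟩

variable {H : Type*} [NormedAddCommGroup H] {ι : ℤ →+ H}

theorem IsBesicovitchModel.preconnectedSpace [CompactSpace H] (hι : IsBesicovitchModel x K ι)
    (hK : IsMaximalPeriod x K) : PreconnectedSpace H := by
  refine preconnectedSpace_of_addSubgroup_eq_top fun U hU => ?_
  obtain ⟨ε, hε, hball⟩ := Metric.isOpen_iff.1 hU 0 U.zero_mem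
  obtain ⟨S₀, hS₀⟩ := hι.window ε hε
  obtain ⟨S, hS, w, hw⟩ := hK.generated S₀
  have hle : cellDiffs x S w ≤ (U.comap ι).map (AddMonoidHom.mulLeft (K : ℤ)) := by
    refine (AddSubgroup.closure_le _).2 ?_
    rintro _ ⟨m, m', hm, hm', rfl⟩
    obtain ⟨k, hk, hkε⟩ := hS₀ m m' (pattern_eq_mono hS (hm.trans hm'.symm))
    exact ⟨k, hball (mem_ball_zero_iff.2 hkε), hk.symm⟩
  obtain ⟨k, hk, hkK : (K : ℤ) * k = K⟩ := hle hw
  have hone : ι 1 ∈ U := by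
    have := hK.pos
    rwa [mul_eq_left₀ (by lia) |>.1 hkK] at hk
  have hrange : range ι ⊆ U := by
    rintro _ ⟨k, rfl⟩
    rw [← mul_one k, ← smul_eq_mul, map_zsmul]
    exact U.zsmul_mem hone k
  have hclosed : IsClosed (U : Set H) := U.isClosed_of_isOpen hU
  exact SetLike.coe_injective
    ((hι.denseRange.mono hrange).closure_eq ▸ hclosed.closure_eq).symm

theorem IsBesicovitchModel.exists_small_return (hι : IsBesicovitchModel x K ι)
    (hK : 1 ≤ K) (hrec : Recurrent x) {η : ℝ} (hη : 0 < η) (L N : ℕ) :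
    ∃ R : ℕ, N ≤ R ∧ ‖ι R‖ < η ∧ ∀ i < L, x i = x (K * R + i) := by
  obtain ⟨S, hS⟩ := hι.window η hη
  obtain ⟨M, hM, hret⟩ := hrec.exists_ge (L + S.sup id + 1) (K * N)
  obtain ⟨k, hk, hkη⟩ := hS M 0 (pattern_add_return (r := 0) fun i hi => hret i (by lia))
  rw [Nat.cast_zero, sub_zero] at hk
  obtain ⟨R, rfl⟩ : ∃ R : ℕ, k = R :=
    Int.eq_ofNat_of_zero_le (nonneg_of_mul_nonneg_right (hk ▸ Int.natCast_nonneg M) (by lia))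
  obtain rfl : M = K * R := by exact_mod_cast hk
  exact ⟨R, Nat.le_of_mul_le_mul_left hM hK, hkη, fun i hi => hret i (by lia)⟩

end Model

section Boundary

open Filter Topology

variable {x : Seq2} {C K : ℕ} {H : Type*} [NormedAddCommGroup H] {ι : ℤ →+ H}

/-- The points of the model approached by the times at which the class of `j` modulo `K` carries
the letter `a`. -/
def letterClosure (ι : ℤ →+ H) (x : Seq2) (K j : ℕ) (a : Fin 2) : Set H :=
  closure ((fun n : ℕ => ι n) '' {n | x (j + K * n) = a})

theorem mem_letterClosure (ι : ℤ →+ H) (x : Seq2) (K j n : ℕ) :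
    ι n ∈ letterClosure ι x K j (x (j + K * n)) :=
  subset_closure ⟨n, rfl, rfl⟩

theorem IsBesicovitchModel.dist_eq (hι : IsBesicovitchModel x K ι) {j n n' u m m' : ℕ}
    (h : m + u = j + K * n) (h' : m' + u = j + K * n') :
    dist (ι n) (ι n') = discrepancy x m m' := by
  rw [dist_eq_norm, ← map_sub]
  refine hι.norm_eq ?_
  have hz : (m : ℤ) + u = j + K * n := mod_cast h
  have hz' : (m' : ℤ) + u = j + K * n' := mod_cast h'
  linear_combination hz - hz'

theorem IsBesicovitchModel.exists_late_letter (hι : IsBesicovitchModel x K ι) (hK : 1 ≤ K)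
    (hrec : Recurrent x) {j : ℕ} {a : Fin 2} {g : H} (hg : g ∈ letterClosure ι x K j a) {η : ℝ}
    (hη : 0 < η) (N : ℕ) : ∃ n : ℕ, N ≤ j + K * n ∧ dist (ι n) g < η ∧ x (j + K * n) = a := by
  obtain ⟨_, ⟨n, hn, rfl⟩, hgn⟩ := Metric.mem_closure_iff.1 hg (η / 2) (half_pos hη)
  obtain ⟨R, hNR, hR, hret⟩ := hι.exists_small_return hK hrec (half_pos hη) (j + K * n + 1) N
  refine ⟨n + R, by nlinarith, ?_, ?_⟩
  · have hstep : dist (ι (n + R : ℕ)) (ι n) < η / 2 := by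
      rwa [dist_eq_norm, Nat.cast_add, map_add, add_sub_cancel_left]
    rw [dist_comm] at hgn
    linarith [dist_triangle (ι (n + R : ℕ)) (ι n) g]
  · have hshift : j + K * (n + R) = K * R + (j + K * n) := by ring
    rw [hshift, ← hret _ (Nat.lt_succ_self _), hn]

theorem IsBesicovitchModel.denseRange_natCast (hι : IsBesicovitchModel x K ι) (hK : 1 ≤ K)
    (hrec : Recurrent x) : DenseRange fun n : ℕ => ι n := by
  refine Metric.denseRange_iff.2 fun h ε hε => ?_
  obtain ⟨k, hk⟩ := hι.denseRange.exists_dist_lt h (half_pos hε)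
  obtain ⟨R, hkR, hR, -⟩ := hι.exists_small_return hK hrec (half_pos hε) 0 k.natAbs
  obtain ⟨n, hn⟩ := Int.eq_ofNat_of_zero_le (by lia : 0 ≤ k + R)
  refine ⟨n, ?_⟩
  have hstep : dist (ι k) (ι n) < ε / 2 := by
    rwa [dist_comm, dist_eq_norm, ← map_sub, ← hn, add_sub_cancel_left]
  linarith [dist_triangle h (ι k) (ι n)]

theorem IsBesicovitchModel.letterClosure_union (hι : IsBesicovitchModel x K ι) (hK : 1 ≤ K)
    (hrec : Recurrent x) (j : ℕ) : letterClosure ι x K j 0 ∪ letterClosure ι x K j 1 = univ := by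
  rw [letterClosure, letterClosure, ← closure_union, ← image_union]
  have hall : {n | x (j + K * n) = 0} ∪ {n | x (j + K * n) = 1} = univ :=
    eq_univ_of_forall fun n => Fin.exists_fin_two.1 ⟨_, rfl⟩
  rw [hall, image_univ, (hι.denseRange_natCast hK hrec).closure_eq]

/-- Near the point `g`, the letter `u` steps after an occurrence of a pattern through `S` depends
only on the pattern. -/
def DeterminesNear (ι : ℤ →+ H) (x : Seq2) (K j : ℕ) (S : Finset ℕ) (u : ℕ) (ε : ℝ) (g : H) :
    Prop :=
  ∀ m m' n : ℕ, pattern x S m = pattern x S m' → m + u = j + K * n → dist (ι n) g < ε →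
    x (m + u) = x (m' + u)

theorem IsBesicovitchModel.exists_determinesNear (hι : IsBesicovitchModel x K ι) {S : Finset ℕ}
    (hS : IsTame C x S) {ε : ℝ}
    (hSε : ∀ m m', pattern x S m = pattern x S m' → discrepancy x m m' < ε) {T : Finset H}
    (hT : C < T.card) (hsep : (T : Set H).Pairwise fun g g' => 3 * ε ≤ dist g g') (j u : ℕ) :
    ∃ g ∈ T, DeterminesNear ι x K j S u ε g := by
  classical
  by_contra! hcon
  simp only [DeterminesNear, not_forall, exists_prop] at hcon
  choose! m m' n hpat hmu hdist hne using hcon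
  have hinj : InjOn (fun g => pattern x S (m g)) T := by
    intro g hg g' hg' heq
    by_contra hgg
    have hnn := hSε _ _ heq
    rw [← hι.dist_eq (hmu g hg) (hmu g' hg')] at hnn
    have hng := hdist g hg
    rw [dist_comm] at hng
    linarith [hsep hg hg' hgg, hdist g' hg', dist_triangle4 g (ι (n g)) (ι (n g')) g']
  have hcard := hS.card_le (u := u) (F := T.image m)
    (by rw [Finset.coe_image]; exact InjOn.image_of_comp hinj)
    (Finset.forall_mem_image.2 fun g hg => ⟨m g, m' g, rfl, (hpat g hg).symm, hne g hg⟩)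
  rw [Finset.card_image_of_injOn (InjOn.of_comp (g := pattern x S) hinj)] at hcard
  lia

/-- Two patterns with occurrences at arbitrarily small Besicovitch distance from each other. -/
def Touching (x : Seq2) (S : Finset ℕ) (w w' : S → Fin 2) : Prop :=
  ∀ η > 0, ∃ m m', pattern x S m = w ∧ pattern x S m' = w' ∧ discrepancy x m m' < η

/-- The times that force the letter `a` after the pattern `w` and `b` after the pattern `w'`. -/
def forcedTimes (x : Seq2) (S : Finset ℕ) (w w' : S → Fin 2) (a b : Fin 2) : Set ℕ :=
  {u | (∀ m, pattern x S m = w → x (m + u) = a) ∧ ∀ m, pattern x S m = w' → x (m + u) = b}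

theorem Touching.density_forcedTimes {S : Finset ℕ} {w w' : S → Fin 2} (h : Touching x S w w')
    {a b : Fin 2} (hab : a ≠ b) : density (forcedTimes x S w w' a b) = 0 := by
  refine le_antisymm (le_of_forall_pos_le_add fun η hη => ?_) (density_nonneg _)
  obtain ⟨m, m', hm, hm', hlt⟩ := h η hη
  rw [zero_add]
  refine (density_mono fun u hu => ?_).trans hlt.le
  rw [mem_ofPred_eq, hu.1 m hm, hu.2 m' hm']
  exact hab

theorem IsBesicovitchModel.exists_touching (hι : IsBesicovitchModel x K ι) (hK : 1 ≤ K)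
    (hrec : Recurrent x) {j u : ℕ} {a b : Fin 2} {g : H} (ha : g ∈ letterClosure ι x K j a)
    (hb : g ∈ letterClosure ι x K j b) {S : Finset ℕ} {ε : ℝ} (hε : 0 < ε)
    (hg : DeterminesNear ι x K j S u ε g) :
    ∃ w w', Touching x S w w' ∧ u ∈ forcedTimes x S w w' a b := by
  have near {c : Fin 2} (hc : g ∈ letterClosure ι x K j c) {η : ℝ} (hη : 0 < η) :
      ∃ n m : ℕ, m + u = j + K * n ∧ dist (ι n) g < η ∧
        ∀ y, pattern x S y = pattern x S m → x (y + u) = c := by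
    obtain ⟨n, hun, hn, hx⟩ := hι.exists_late_letter hK hrec hc (lt_min hε hη) u
    have hmu := Nat.sub_add_cancel hun
    refine ⟨n, j + K * n - u, hmu, hn.trans_le (min_le_right _ _), fun y hy => ?_⟩
    rw [← hg _ y n hy.symm hmu (hn.trans_le (min_le_left _ _)), hmu, hx]
  have hη (k : ℕ) : 0 < 1 / ((k : ℝ) + 1) / 2 := by positivity
  choose n m hmu hdist hforce using fun k => near ha (hη k)
  choose n' m' hmu' hdist' hforce' using fun k => near hb (hη k)
  obtain ⟨⟨w, w'⟩, hfreq⟩ :=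
    exists_frequent_value fun k => (pattern x S (m k), pattern x S (m' k))
  refine ⟨w, w', fun η hη => ?_, ?_⟩
  · obtain ⟨N, hN⟩ := exists_nat_one_div_lt hη
    obtain ⟨k, hk, heq⟩ := hfreq N
    obtain ⟨rfl, rfl⟩ := Prod.mk.inj heq
    refine ⟨m k, m' k, rfl, rfl, ?_⟩
    rw [← hι.dist_eq (hmu k) (hmu' k)]
    have hkN := Nat.one_div_le_one_div (α := ℝ) hk
    have hdist'' := hdist' k
    rw [dist_comm] at hdist''
    linarith [dist_triangle (ι (n k)) g (ι (n' k)), hdist k]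
  · obtain ⟨k, -, heq⟩ := hfreq 0
    obtain ⟨rfl, rfl⟩ := Prod.mk.inj heq
    exact ⟨hforce k, hforce' k⟩

theorem exists_pos_pairwise_three_mul_le_dist {X : Type*} [MetricSpace X] (T : Finset X) :
    ∃ ε > 0, (T : Set X).Pairwise fun g g' => 3 * ε ≤ dist g g' := by
  have hsep : ∀ᶠ ε in 𝓝[>] (0 : ℝ), ∀ g ∈ T, ∀ g' ∈ T, g ≠ g' → 3 * ε ≤ dist g g' := by
    refine (Finset.eventually_all T).2 fun g _ => (Finset.eventually_all T).2 fun g' _ =>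
      eventually_imp_distrib_left.2 fun hne => ?_
    filter_upwards [Ioo_mem_nhdsGT (div_pos (dist_pos.2 hne) three_pos)] with ε hε
    linarith [hε.2]
  obtain ⟨ε, hε, hpos⟩ := (hsep.and self_mem_nhdsWithin).exists
  exact ⟨ε, hpos, fun g hg g' hg' => hε g hg g' hg'⟩

theorem IsBesicovitchModel.finite_boundary (hι : IsBesicovitchModel x K ι) (hK : 1 ≤ K)
    (hrec : Recurrent x) (htame : CofinallyTame C x) (j : ℕ) {a b : Fin 2} (hab : a ≠ b) :
    (letterClosure ι x K j a ∩ letterClosure ι x K j b).Finite := by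
  classical
  by_contra hinf
  obtain ⟨T, hT, hTcard⟩ := Set.Infinite.exists_subset_card_eq hinf (C + 1)
  obtain ⟨ε, hε, hsep⟩ := exists_pos_pairwise_three_mul_le_dist T
  obtain ⟨S₀, hS₀⟩ := hι.window ε hε
  obtain ⟨S, hS₀S, hS⟩ := htame S₀
  have hSε m m' (h : pattern x S m = pattern x S m') : discrepancy x m m' < ε := by
    obtain ⟨k, hk, hkε⟩ := hS₀ m m' (pattern_eq_mono hS₀S h)
    rwa [hι.norm_eq hk] at hkε
  let W : Finset ((S → Fin 2) × (S → Fin 2)) := Finset.univ.filter fun p => Touching x S p.1 p.2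
  have hcover (u : ℕ) (_ : u ∈ univ) : ∃ p ∈ W, u ∈ forcedTimes x S p.1 p.2 a b := by
    obtain ⟨g, hgT, hg⟩ := hι.exists_determinesNear hS hSε (hTcard ▸ C.lt_succ_self) hsep j u
    obtain ⟨w, w', htouch, hu⟩ := hι.exists_touching hK hrec (hT hgT).1 (hT hgT).2 hε hg
    exact ⟨(w, w'), Finset.mem_filter.2 ⟨Finset.mem_univ _, htouch⟩, hu⟩
  have hle := density_le_sum hcover
  rw [density_univ, Finset.sum_eq_zero fun p hp =>
    (Finset.mem_filter.1 hp).2.density_forcedTimes hab] at hle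
  linarith

theorem IsBesicovitchModel.eventually_of_letterClosure_eq_univ (hι : IsBesicovitchModel x K ι)
    (hK : 1 ≤ K) (hrec : Recurrent x) (htame : CofinallyTame C x) {j : ℕ} {a : Fin 2}
    (h : letterClosure ι x K j a = univ) : ∀ᶠ n in atTop, x (j + K * n) = a := by
  have hfin (b : Fin 2) (hab : a ≠ b) : {n | x (j + K * n) = b}.Finite := by
    have hbd := hι.finite_boundary hK hrec htame j hab
    rw [h, univ_inter] at hbd
    exact Finite.of_finite_image (hbd.subset subset_closure)
      (hι.injective.comp Nat.cast_injective).injOn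
  rw [← Nat.cofinite_eq_atTop]
  refine (hfin (a + 1) (by lia)).subset fun n hn => ?_
  rw [mem_compl_iff, mem_ofPred_eq] at hn
  rw [mem_ofPred_eq]
  lia

theorem periodic_of_eventually_const (hur : UniformlyRecurrent x) (hK : 1 ≤ K)
    (h : ∀ j < K, ∃ a, ∀ᶠ n in atTop, x (j + K * n) = a) : Periodic x := by
  choose! a ha using h
  obtain ⟨N, hN⟩ := eventually_atTop.1 ((finite_Iio K).eventually_all.2 ha)
  refine hur.periodic_of_blocks hK fun _ => ⟨K * N, fun i _ => ?_⟩
  have hmod : i % K < K := Nat.mod_lt i hK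
  have hi : K * N + i = i % K + K * (N + i / K) := by
    rw [mul_add, add_left_comm, Nat.mod_add_div]
  have hiK : K * N + (i + K) = i % K + K * (N + i / K + 1) := by
    rw [← add_assoc, hi]
    ring
  rw [hi, hiK, hN _ (by lia) _ hmod, hN _ (by lia) _ hmod]

theorem IsBesicovitchModel.exists_letterClosure_ne_univ (hι : IsBesicovitchModel x K ι)
    (hK : 1 ≤ K) (hrec : Recurrent x) (hur : UniformlyRecurrent x) (hper : ¬ Periodic x)
    (htame : CofinallyTame C x) : ∃ j < K, ∀ a, letterClosure ι x K j a ≠ univ := by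
  by_contra! h
  refine hper (periodic_of_eventually_const hur hK fun j hj => ?_)
  obtain ⟨a, ha⟩ := h j hj
  exact ⟨a, hι.eventually_of_letterClosure_eq_univ hK hrec htame ha⟩

end Boundary

section Pieces

open MeasureTheory

theorem closure_subset_union_of_iUnion_eq_compl {X ι : Type*} [TopologicalSpace X] {M : ι → Set X}
    {E : Set X} (hopen : ∀ i, IsOpen (M i)) (hdisj : Pairwise fun i j => Disjoint (M i) (M j))
    (hcover : ⋃ i, M i = Eᶜ) (i : ι) : closure (M i) ⊆ M i ∪ E := by
  intro y hy
  by_contra! hyn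
  obtain ⟨hyM, hyE⟩ := not_or.1 hyn
  obtain ⟨k, hk⟩ := mem_iUnion.1 (hcover.ge hyE)
  have hki : k ≠ i := by rintro rfl; exact hyM hk
  exact disjoint_left.1 ((hdisj hki).closure_right (hopen k)) hk hy

/-- A nonempty open `P` none of whose nonempty open parts is closed up to `E \ {p}` must reach `p`,
and `p` holds it together. -/
theorem isPreconnected_insert_of_forall_eq_empty {X : Type*} [TopologicalSpace X] {P E : Set X}
    {p : X} (hP : IsOpen P) (hclosure : closure P ⊆ P ∪ E)
    (hparts : ∀ Y ⊆ P, IsOpen Y → closure Y ⊆ Y ∪ E \ {p} → Y = ∅) :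
    IsPreconnected (insert p P) := by
  have hside : ∀ u v : Set X, IsOpen u → IsOpen v → insert p P ⊆ u ∪ v →
      insert p P ∩ (u ∩ v) = ∅ → p ∈ u → insert p P ⊆ u := by
    intro u v hu hv hcover hdisj hpu
    have huv : Disjoint u (P ∩ v) := disjoint_left.2 fun z hzu hz =>
      (hdisj.le ⟨Or.inr hz.1, hzu, hz.2⟩).elim
    have hempty : P ∩ v = ∅ := by
      refine hparts _ inter_subset_left (hP.inter hv) fun y hy => ?_
      have hyu : y ∉ u := fun hyu => disjoint_left.1 (huv.closure_right hu) hyu hy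
      rcases hclosure (closure_mono inter_subset_left hy) with hyP | hyE
      · exact Or.inl ⟨hyP, (hcover (Or.inr hyP)).resolve_left hyu⟩
      · exact Or.inr ⟨hyE, by rintro rfl; exact hyu hpu⟩
    rintro y (rfl | hy)
    · exact hpu
    · exact (hcover (Or.inr hy)).resolve_right fun hyv => (hempty.le ⟨hy, hyv⟩).elim
  rw [isPreconnected_iff_subset_of_disjoint]
  intro u v hu hv hcover hdisj
  rcases hcover (mem_insert _ _) with hp | hp
  · exact Or.inl (hside u v hu hv hcover hdisj hp)
  · exact Or.inr (hside v u hv hu (union_comm u v ▸ hcover) (inter_comm u v ▸ hdisj) hp)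

theorem exists_forall_add_notMem {G ι : Type*} [AddGroup G] [Fintype ι] {M : ι → Set G}
    {E : Finset G} (hdisj : Pairwise fun i j => Disjoint (M i) (M j))
    (hcard : E.card < Fintype.card ι) (t : G) : ∃ i, ∀ y ∈ M i, t + y ∉ E := by
  by_contra! hall
  choose f hf hfE using hall
  refine hcard.not_ge ?_
  rw [← Fintype.card_coe]
  refine Fintype.card_le_of_injective (fun i => (⟨_, hfE i⟩ : E)) fun i j hij => ?_
  by_contra hne
  have hfij : f i = f j := add_left_cancel (Subtype.mk.inj hij)
  exact disjoint_left.1 (hdisj hne) (hf i) (hfij ▸ hf j)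

variable {H : Type*} [AddCommGroup H] [TopologicalSpace H] [IsTopologicalAddGroup H]
  [CompactSpace H]

/-- If there were more pieces than points removed, some translate of a piece would miss the
removed points, hence sit inside the piece of least Haar measure and leave room there for another
piece. -/
theorem card_le_card_of_isPreconnected_insert {ι : Type*} [Fintype ι] {M : ι → Set H}
    {E : Finset H} {p : H} (hp : p ∈ E) (hopen : ∀ i, IsOpen (M i))
    (hdisj : Pairwise fun i j => Disjoint (M i) (M j)) (hcover : ⋃ i, M i = (E : Set H)ᶜ)
    (hclosure : ∀ i, p ∈ closure (M i)) (hconn : ∀ i, IsPreconnected (insert p (M i))) :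
    Fintype.card ι ≤ E.card := by
  by_contra! hcard
  let : MeasurableSpace H := borel H
  have : BorelSpace H := ⟨rfl⟩
  let μ : Measure H := Measure.addHaar
  have hpos : 0 < E.card := Finset.card_pos.2 ⟨p, hp⟩
  have : Nonempty ι := Fintype.card_pos_iff.1 (by lia)
  have : Nontrivial ι := Fintype.one_lt_card_iff_nontrivial.1 (by lia)
  obtain ⟨i₀, hmin⟩ := Finite.exists_min fun i => μ (M i)
  obtain ⟨r, hr⟩ := closure_nonempty_iff.1 ⟨p, hclosure i₀⟩
  let V : ι → Set H := fun k => (fun y => r - p + y) ⁻¹' M k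
  have hV : ∀ k, IsOpen (V k) := fun k => (hopen k).preimage (by fun_prop)
  have hpV : p ∈ V i₀ := by simpa [V] using hr
  obtain ⟨i, hi⟩ := exists_forall_add_notMem hdisj hcard (r - p)
  have hsub : insert p (M i) ⊆ V i₀ := by
    refine (hconn i).subset_left_of_subset_union (hV i₀)
      (isOpen_biUnion fun k (_ : k ∈ ({i₀} : Set ι)ᶜ) => hV k) ?_ ?_ ⟨p, mem_insert _ _, hpV⟩
    · exact disjoint_iUnion₂_right.2 fun k hk => (hdisj (Ne.symm hk)).preimage _
    · rintro y (rfl | hy)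
      · exact Or.inl hpV
      · obtain ⟨k, hk⟩ := mem_iUnion.1 (hcover.ge (hi y hy))
        by_cases hki : k = i₀
        · exact Or.inl (hki ▸ hk)
        · exact Or.inr (mem_biUnion hki hk)
  obtain ⟨j, hji⟩ := exists_ne i
  have hroom : 0 < μ (V i₀ ∩ M j) :=
    ((hV i₀).inter (hopen j)).measure_pos μ (mem_closure_iff.1 (hclosure j) _ (hV i₀) hpV)
  refine (hmin i).not_gt ?_
  calc μ (M i) < μ (M i) + μ (V i₀ ∩ M j) :=
        ENNReal.lt_add_right (measure_ne_top μ _) hroom.ne'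
    _ = μ (M i ∪ V i₀ ∩ M j) :=
        (measure_union ((hdisj hji.symm).mono_right inter_subset_right)
          ((hV i₀).inter (hopen j)).measurableSet).symm
    _ ≤ μ (V i₀) :=
        measure_mono (union_subset ((subset_insert _ _).trans hsub) inter_subset_left)
    _ = μ (M i₀) := measure_preimage_add μ _ _

theorem card_le_card_of_isPreconnected_compl {ι : Type*} [Fintype ι] {M : ι → Set H} {E : Finset H}
    {p : H} (hp : p ∈ E) (hE : IsPreconnected (E \ {p} : Set H)ᶜ) (hopen : ∀ i, IsOpen (M i))
    (hne : ∀ i, (M i).Nonempty) (hdisj : Pairwise fun i j => Disjoint (M i) (M j))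
    (hcover : ⋃ i, M i = (E : Set H)ᶜ) : Fintype.card ι ≤ E.card := by
  have hME : ∀ i, M i ⊆ (E : Set H)ᶜ := fun i => hcover ▸ subset_iUnion M i
  have hclosure := closure_subset_union_of_iUnion_eq_compl hopen hdisj hcover
  have hparts : ∀ i, ∀ Y ⊆ M i, IsOpen Y → closure Y ⊆ Y ∪ E \ {p} → Y = ∅ := by
    intro i Y hYM hY hYcl
    by_contra hYne
    have hpY : p ∉ Y := fun h => hME i (hYM h) hp
    obtain ⟨y, -, hyY, hyn⟩ := hE Y (closure Y)ᶜ hY isClosed_closure.isOpen_compl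
      (fun y hy => (em (y ∈ closure Y)).imp (fun h => (hYcl h).resolve_right hy) id)
      ((nonempty_iff_ne_empty.2 hYne).imp fun y hy => ⟨fun h => hME i (hYM hy) h.1, hy⟩)
      ⟨p, fun h => h.2 rfl, fun h => (hYcl h).elim hpY fun h => h.2 rfl⟩
    exact hyn (subset_closure hyY)
  refine card_le_card_of_isPreconnected_insert hp hopen hdisj hcover (fun i => ?_) fun i =>
    isPreconnected_insert_of_forall_eq_empty (hopen i) (hclosure i) (hparts i)
  by_contra hpi
  refine (hne i).ne_empty (hparts i _ subset_rfl (hopen i) fun y hy => ?_)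
  exact (hclosure i hy).imp_right fun h => ⟨h, by rintro rfl; exact hpi hy⟩

theorem isPreconnected_compl_singleton [PreconnectedSpace H] [T1Space H] (e : H) :
    IsPreconnected ({e}ᶜ : Set H) := by
  rw [isPreconnected_iff_subset_of_disjoint]
  intro u v hu hv hcover hdisj
  by_contra! hnot
  obtain ⟨⟨a, hae, hau⟩, ⟨b, hbe, hbv⟩⟩ := hnot.imp not_subset.1 not_subset.1
  have hopen : IsOpen ({e}ᶜ : Set H) := isOpen_compl_singleton
  have hcard := card_le_card_of_isPreconnected_compl (ι := Bool)
    (M := fun i => {e}ᶜ ∩ bif i then u else v) (E := {e}) (Finset.mem_singleton_self e)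
    (by simpa using isPreconnected_univ) (by simp [hopen.inter, hu, hv])
    (by
      simp only [Bool.forall_bool]
      exact ⟨⟨a, hae, (hcover hae).resolve_left hau⟩, ⟨b, hbe, (hcover hbe).resolve_right hbv⟩⟩)
    (by
      have huv : Disjoint ({e}ᶜ ∩ u) ({e}ᶜ ∩ v) := disjoint_left.2 fun y hyu hyv =>
        (hdisj.le ⟨hyu.1, hyu.2, hyv.2⟩).elim
      rintro (_ | _) (_ | _) hij <;> simp_all [huv.symm])
    (by
      rw [← inter_iUnion, Finset.coe_singleton, inter_eq_left]
      exact fun y hy => mem_iUnion.2 ((hcover hy).elim (fun h => ⟨true, h⟩) fun h => ⟨false, h⟩))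
  simp at hcard

theorem union_union_ne_compl_pair [PreconnectedSpace H] [T1Space H] {d e : H} {P Q R : Set H}
    (hP : IsOpen P) (hQ : IsOpen Q) (hR : IsOpen R) (hPne : P.Nonempty) (hQne : Q.Nonempty)
    (hRne : R.Nonempty) (hPQ : Disjoint P Q) (hPR : Disjoint P R) (hQR : Disjoint Q R) :
    P ∪ Q ∪ R ≠ {d, e}ᶜ := by
  classical
  intro hcover
  have hE : IsPreconnected ((({d, e} : Finset H) : Set H) \ {d})ᶜ := by
    by_cases hde : e = d
    · simpa [hde] using isPreconnected_univ
    · have hsdiff : (({d, e} : Finset H) : Set H) \ {d} = {e} := by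
        ext y
        simp only [Finset.coe_insert, Finset.coe_singleton, mem_sdiff, mem_insert_iff,
          mem_singleton_iff]
        grind
      exact hsdiff ▸ isPreconnected_compl_singleton e
  have hcard := card_le_card_of_isPreconnected_compl (M := ![P, Q, R])
    (Finset.mem_insert_self d {e}) hE (by simp [Fin.forall_fin_succ, hP, hQ, hR])
    (by simp [Fin.forall_fin_succ, hPne, hQne, hRne])
    (by simp [Pairwise, Fin.forall_fin_succ, hPQ, hPR, hQR, hPQ.symm, hPR.symm, hQR.symm])
    (by rw [Finset.coe_pair, ← hcover]; ext y; simp [Fin.exists_fin_succ, or_assoc])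
  exact absurd (hcard.trans Finset.card_le_two) (by simp)

end Pieces

section LocalCoordinate

open Filter Topology MeasureTheory
open scoped symmDiff

/-- An injective continuous local homomorphism from the ball of radius `ρ` about `0` to the
reals. -/
structure IsLocalCoordinate {H : Type*} [NormedAddCommGroup H] (lam : H → ℝ) (ρ : ℝ) : Prop where
  pos : 0 < ρ
  continuousOn : ContinuousOn lam (Metric.ball 0 ρ)
  map_add : ∀ {h h' : H}, ‖h‖ < ρ → ‖h'‖ < ρ → lam (h + h') = lam h + lam h'
  eq_zero : ∀ {h : H}, ‖h‖ < ρ → lam h = 0 → h = 0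

section Flux

variable {G : Type*} [AddCommGroup G] [MeasurableSpace G]

/-- The net measure of the part of the window `W` which translation by `h` carries out of `A`. -/
noncomputable def flux (μ : Measure G) (A W : Set G) (h : G) : ℝ :=
  μ.real (W ∩ A) - μ.real (W ∩ (fun z => z + h) ⁻¹' A)

variable {μ : Measure G} {A W : Set G}

theorem flux_add [MeasurableAdd G] [μ.IsAddRightInvariant] (h h' : G) :
    flux μ A W (h + h') = flux μ A W h + flux μ A ((fun z => z - h) ⁻¹' W) h' := by
  have hshift : ∀ S : Set G,
      μ.real ((fun z => z - h) ⁻¹' W ∩ S) = μ.real (W ∩ (fun z => z + h) ⁻¹' S) := by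
    intro S
    rw [measureReal_def, ← measure_preimage_add_right μ h]
    simp only [preimage_inter, preimage_preimage, add_sub_cancel_right, preimage_id',
      measureReal_def]
  unfold flux
  rw [hshift, hshift, preimage_preimage]
  simp only [add_assoc]
  ring

theorem flux_eq_of_forall_mem_symmDiff [IsFiniteMeasure μ] {V : Set G} {h : G}
    (hV : MeasurableSet V) (hW : MeasurableSet W) (hA : ∀ z ∈ V ∆ W, z + h ∈ A ↔ z ∈ A) :
    flux μ A V h = flux μ A W h := by
  have hsdiff : ∀ U T : Set G, U \ T ⊆ V ∆ W →
      (U ∩ (fun z => z + h) ⁻¹' A) \ T = (U ∩ A) \ T := by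
    intro U T hUT
    ext z
    have hz : z ∈ U → z ∉ T → (z + h ∈ A ↔ z ∈ A) := fun hU hT => hA z (hUT ⟨hU, hT⟩)
    simp only [Set.mem_sdiff, mem_inter_iff, mem_preimage]
    tauto
  unfold flux
  rw [← measureReal_inter_add_sdiff (s := V ∩ A) hW, ← measureReal_inter_add_sdiff (s := W ∩ A) hV,
    ← measureReal_inter_add_sdiff (s := V ∩ (fun z => z + h) ⁻¹' A) hW,
    ← measureReal_inter_add_sdiff (s := W ∩ (fun z => z + h) ⁻¹' A) hV,
    hsdiff V W subset_union_left, hsdiff W V subset_union_right,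
    inter_right_comm V A, inter_right_comm W A, inter_right_comm V _ W, inter_right_comm W _ V,
    inter_comm W V]
  ring

end Flux

theorem continuous_flux {G : Type*} [AddCommGroup G] [TopologicalSpace G] [IsTopologicalAddGroup G]
    [MeasurableSpace G] [BorelSpace G] (μ : Measure G) [IsFiniteMeasure μ] [μ.IsAddHaarMeasure]
    [μ.InnerRegularCompactLTTop] {A W : Set G} (hA : MeasurableSet A) (hW : MeasurableSet W) :
    Continuous (flux μ A W) := by
  let translate : C(G, C(G, G)) := ContinuousMap.curry ⟨fun p : G × G => p.2 + p.1, by fun_prop⟩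
  have hmeas : ∀ h : G, MeasurableSet ((fun z => z + h) ⁻¹' A) :=
    fun h => hA.preimage (measurable_add_const h)
  refine continuous_const.sub (continuous_iff_continuousAt.2 fun h₀ => ?_)
  rw [ContinuousAt, tendsto_iff_dist_tendsto_zero]
  have hlim : Tendsto (fun h => μ.real ((translate h ⁻¹' A) ∆ (translate h₀ ⁻¹' A))) (𝓝 h₀) (𝓝 0) :=
    (ENNReal.tendsto_toReal_zero_iff fun _ => measure_ne_top μ _).2 <|
      tendsto_measure_symmDiff_preimage_nhds_zero (translate.continuous.tendsto h₀)
        (.of_forall fun h => measurePreserving_add_right μ h) (measurePreserving_add_right μ h₀)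
        hA.nullMeasurableSet (measure_ne_top μ A)
  refine squeeze_zero (fun _ => dist_nonneg) (fun h => ?_) hlim
  refine (abs_measureReal_sub_le_measureReal_symmDiff (hW.inter (hmeas h)).nullMeasurableSet
    (hW.inter (hmeas h₀)).nullMeasurableSet).trans (measureReal_mono ?_)
  rw [← inter_symmDiff_distrib_left]
  exact inter_subset_right

/-- The open sets `A` and `B` split the punctured ball of radius `2 * w` about `0`, their common
boundary point. -/
structure IsPuncturedSplit {H : Type*} [NormedAddCommGroup H] (A B : Set H) (w : ℝ) : Prop where
  pos : 0 < w
  isOpen_left : IsOpen A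
  isOpen_right : IsOpen B
  disjoint : Disjoint A B
  cover : ∀ {z : H}, ‖z‖ ≤ 2 * w → z ≠ 0 → z ∈ A ∪ B
  zero_mem_closure_left : 0 ∈ closure A
  zero_mem_closure_right : 0 ∈ closure B

namespace IsPuncturedSplit

variable {H : Type*} [NormedAddCommGroup H] {A B : Set H} {w δ : ℝ} {h : H}

theorem symm (hs : IsPuncturedSplit A B w) : IsPuncturedSplit B A w :=
  ⟨hs.pos, hs.isOpen_right, hs.isOpen_left, hs.disjoint.symm, fun hz h0 => (hs.cover hz h0).symm,
    hs.zero_mem_closure_right, hs.zero_mem_closure_left⟩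

theorem zero_notMem_left (hs : IsPuncturedSplit A B w) : 0 ∉ A := fun h0 =>
  disjoint_left.1 (hs.disjoint.closure_right hs.isOpen_left) h0 hs.zero_mem_closure_right

theorem exists_forall_add_mem_left [CompactSpace H] (hs : IsPuncturedSplit A B w) :
    ∃ δ > 0, ∀ {z h : H}, z ∈ A → w / 2 ≤ ‖z‖ → ‖z‖ ≤ 2 * w → ‖h‖ < δ → z + h ∈ A := by
  let S : Set H := {z | w / 2 ≤ ‖z‖ ∧ ‖z‖ ≤ 2 * w} ∩ Bᶜ
  have hS : IsClosed S := ((isClosed_le continuous_const continuous_norm).inter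
    (isClosed_le continuous_norm continuous_const)).inter hs.isOpen_right.isClosed_compl
  have hSA : S ⊆ A := fun z hz => (hs.cover hz.1.2 (norm_pos_iff.1
    ((half_pos hs.pos).trans_le hz.1.1))).resolve_right hz.2
  obtain ⟨δ, hδ, hsub⟩ := hS.isCompact.exists_thickening_subset_open hs.isOpen_left hSA
  refine ⟨δ, hδ, fun {z h} hzA hwz hzw hh => hsub (Metric.mem_thickening_iff.2 ⟨z, ?_, ?_⟩)⟩
  · exact ⟨⟨hwz, hzw⟩, disjoint_left.1 hs.disjoint hzA⟩
  · simpa [dist_eq_norm] using hh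

theorem exists_forall_add_mem_iff [CompactSpace H] (hs : IsPuncturedSplit A B w) :
    ∃ δ > 0, δ ≤ w / 2 ∧ ∀ {z h : H}, w / 2 ≤ ‖z‖ → ‖z‖ ≤ 2 * w → ‖h‖ < δ →
      (z ∈ A ∧ z + h ∈ A) ∨ (z ∈ B ∧ z + h ∈ B) := by
  obtain ⟨δA, hδA, hA⟩ := hs.exists_forall_add_mem_left
  obtain ⟨δB, hδB, hB⟩ := hs.symm.exists_forall_add_mem_left
  have hw := hs.pos
  refine ⟨min (w / 2) (min δA δB), by positivity, min_le_left _ _, fun {z h} hwz hzw hh => ?_⟩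
  simp only [lt_min_iff] at hh
  rcases hs.cover hzw (norm_pos_iff.1 ((half_pos hw).trans_le hwz)) with hz | hz
  · exact Or.inl ⟨hz, hA hz hwz hzw hh.2.1⟩
  · exact Or.inr ⟨hz, hB hz hwz hzw hh.2.2⟩

/-- The points of the window that translation by `h` carries from `A` to `B`. -/
def crossing (A B : Set H) (w : ℝ) (h : H) : Set H :=
  Metric.ball 0 w ∩ (A ∩ (fun z => z + h) ⁻¹' B)

theorem isOpen_crossing (hs : IsPuncturedSplit A B w) (h : H) : IsOpen (crossing A B w h) :=
  Metric.isOpen_ball.inter (hs.isOpen_left.inter (hs.isOpen_right.preimage (by fun_prop)))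

theorem crossing_nonempty (hs : IsPuncturedSplit A B w) (hh : h ∈ B) :
    (crossing A B w h).Nonempty := by
  have hnhds : Metric.ball 0 w ∩ (fun z => z + h) ⁻¹' B ∈ 𝓝 (0 : H) :=
    (Metric.isOpen_ball.inter (hs.isOpen_right.preimage (by fun_prop))).mem_nhds
      ⟨Metric.mem_ball_self hs.pos, by simpa using hh⟩
  obtain ⟨z, ⟨hzw, hzB⟩, hzA⟩ := mem_closure_iff_nhds.1 hs.zero_mem_closure_left _ hnhds
  exact ⟨z, hzw, hzA, hzB⟩

theorem add_mem_union (hs : IsPuncturedSplit A B w) (hh : ‖h‖ ≤ w) {z : H} (hz : ‖z‖ ≤ w)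
    (hne : z ≠ -h) : z + h ∈ A ∪ B :=
  hs.cover ((norm_add_le z h).trans (by linarith)) fun h0 => hne (eq_neg_of_add_eq_zero_left h0)

theorem flux_eq_sub [MeasurableSpace H] [BorelSpace H] (μ : Measure H) [IsFiniteMeasure μ]
    [NullSingletonClass μ] (hs : IsPuncturedSplit A B w) (hh : ‖h‖ ≤ w) :
    flux μ A (Metric.ball 0 w) h =
      μ.real (crossing A B w h) - μ.real (crossing B A w h) := by
  have hA := hs.isOpen_left.measurableSet
  have hT := hA.preimage (measurable_add_const h)
  have hne : ∀ a : H, ∀ᵐ z ∂μ, z ≠ a := fun a => by simp [ae_iff]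
  have hout : μ.real ((Metric.ball 0 w ∩ A) \ (fun z => z + h) ⁻¹' A) =
      μ.real (crossing A B w h) := by
    refine measureReal_congr (eventuallyEq_set.2 ?_)
    filter_upwards [hne (-h)] with z hz
    refine ⟨fun ⟨⟨hzw, hzA⟩, hzh⟩ => ⟨hzw, hzA, ?_⟩, fun ⟨hzw, hzA, hzh⟩ => ⟨⟨hzw, hzA⟩, ?_⟩⟩
    · exact (hs.add_mem_union hh (mem_ball_zero_iff.1 hzw).le hz).resolve_left hzh
    · exact disjoint_right.1 hs.disjoint hzh
  have hin : μ.real ((Metric.ball 0 w ∩ (fun z => z + h) ⁻¹' A) \ A) =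
      μ.real (crossing B A w h) := by
    refine measureReal_congr (eventuallyEq_set.2 ?_)
    filter_upwards [hne 0] with z hz
    refine ⟨fun ⟨⟨hzw, hzh⟩, hzA⟩ => ⟨hzw, ?_, hzh⟩, fun ⟨hzw, hzB, hzh⟩ => ⟨⟨hzw, hzh⟩, ?_⟩⟩
    · have hzw' : ‖z‖ ≤ 2 * w := by linarith [mem_ball_zero_iff.1 hzw, hs.pos]
      exact (hs.cover hzw' hz).resolve_left hzA
    · exact disjoint_right.1 hs.disjoint hzB
  rw [flux, ← measureReal_inter_add_sdiff (s := Metric.ball 0 w ∩ A) hT, hout,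
    ← measureReal_inter_add_sdiff (s := Metric.ball 0 w ∩ (fun z => z + h) ⁻¹' A) hA, hin,
    inter_right_comm _ A]
  ring

/-- The points that translation by `h` does not carry across the split, together with all points
outside the window. -/
def noncrossing (A B : Set H) (w : ℝ) (h : H) : Set H :=
  A ∩ (fun z => z + h) ⁻¹' A ∪ B ∩ (fun z => z + h) ⁻¹' B ∪ {z | w < ‖z‖}

theorem isOpen_noncrossing (hs : IsPuncturedSplit A B w) (h : H) :
    IsOpen (noncrossing A B w h) :=
  ((hs.isOpen_left.inter (hs.isOpen_left.preimage (by fun_prop))).union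
    (hs.isOpen_right.inter (hs.isOpen_right.preimage (by fun_prop)))).union
    (isOpen_lt continuous_const continuous_norm)

theorem disjoint_crossing_crossing (hs : IsPuncturedSplit A B w) :
    Disjoint (crossing A B w h) (crossing B A w h) :=
  disjoint_left.2 fun _ hz hz' => disjoint_left.1 hs.disjoint hz.2.1 hz'.2.1

theorem disjoint_crossing_noncrossing (hs : IsPuncturedSplit A B w) :
    Disjoint (crossing A B w h) (noncrossing A B w h) := by
  have hdisj : ∀ {z}, z ∈ A → z ∉ B := fun hz => disjoint_left.1 hs.disjoint hz
  refine disjoint_left.2 ?_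
  rintro z ⟨hzw, hzA, hzB⟩ ((hz | hz) | hz)
  exacts [hdisj hz.2 hzB, hdisj hzA hz.1, hz.not_gt (mem_ball_zero_iff.1 hzw)]

theorem noncrossing_comm (A B : Set H) (w : ℝ) (h : H) :
    noncrossing A B w h = noncrossing B A w h := by
  rw [noncrossing, noncrossing, union_comm (A ∩ _)]

theorem crossing_union_crossing_union_noncrossing (hs : IsPuncturedSplit A B w) (hh : ‖h‖ ≤ w / 2)
    (hstay : ∀ {z : H}, w / 2 ≤ ‖z‖ → ‖z‖ ≤ 2 * w →
      (z ∈ A ∧ z + h ∈ A) ∨ (z ∈ B ∧ z + h ∈ B)) :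
    crossing A B w h ∪ crossing B A w h ∪ noncrossing A B w h = {0, -h}ᶜ := by
  have hw := hs.pos
  have h0 : (0 : H) ∉ A ∪ B := not_or.2 ⟨hs.zero_notMem_left, hs.symm.zero_notMem_left⟩
  have hmem : ∀ {z}, z ∈ crossing A B w h ∪ crossing B A w h ∪ noncrossing A B w h → ‖z‖ ≤ w →
      z ∈ A ∪ B ∧ z + h ∈ A ∪ B := by
    rintro z ((⟨-, hz, hz'⟩ | ⟨-, hz, hz'⟩) | (⟨hz, hz'⟩ | ⟨hz, hz'⟩) | hz) hzw
    exacts [⟨Or.inl hz, Or.inr hz'⟩, ⟨Or.inr hz, Or.inl hz'⟩, ⟨Or.inl hz, Or.inl hz'⟩,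
      ⟨Or.inr hz, Or.inr hz'⟩, absurd hz hzw.not_gt]
  ext z
  refine ⟨fun hz => ?_, fun hz => ?_⟩
  · rintro (rfl | rfl)
    · exact h0 (hmem hz (by simpa using hw.le)).1
    · exact h0 (by simpa using (hmem hz (by rw [norm_neg]; linarith)).2)
  · obtain ⟨hz0, hzh⟩ := not_or.1 hz
    rcases lt_or_ge w ‖z‖ with hzw | hzw
    · exact Or.inr (Or.inr hzw)
    rcases lt_or_ge ‖z‖ w with hzw' | hzw'
    · have hzW := mem_ball_zero_iff.2 hzw'
      rcases hs.cover (by linarith) hz0, hs.add_mem_union (by linarith) hzw hzh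
        with ⟨hzA | hzB, hzA' | hzB'⟩
      exacts [Or.inr (Or.inl (Or.inl ⟨hzA, hzA'⟩)), Or.inl (Or.inl ⟨hzW, hzA, hzB'⟩),
        Or.inl (Or.inr ⟨hzW, hzB, hzA'⟩), Or.inr (Or.inl (Or.inr ⟨hzB, hzB'⟩))]
    · exact Or.inr (Or.inl (hstay (by linarith) (by linarith)))

theorem crossing_eq_empty_or [CompactSpace H] [PreconnectedSpace H] (hs : IsPuncturedSplit A B w)
    (hfar : ∃ p : H, w < ‖p‖) (hh : ‖h‖ ≤ w / 2)
    (hstay : ∀ {z : H}, w / 2 ≤ ‖z‖ → ‖z‖ ≤ 2 * w →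
      (z ∈ A ∧ z + h ∈ A) ∨ (z ∈ B ∧ z + h ∈ B)) :
    crossing A B w h = ∅ ∨ crossing B A w h = ∅ := by
  by_contra! hne
  obtain ⟨p, hp⟩ := hfar
  exact union_union_ne_compl_pair (hs.isOpen_crossing h) (hs.symm.isOpen_crossing h)
    (hs.isOpen_noncrossing h) hne.1 hne.2 ⟨p, Or.inr hp⟩ hs.disjoint_crossing_crossing
    hs.disjoint_crossing_noncrossing
    (noncrossing_comm A B w h ▸ hs.symm.disjoint_crossing_noncrossing)
    (hs.crossing_union_crossing_union_noncrossing hh hstay)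

theorem flux_ne_zero [CompactSpace H] [PreconnectedSpace H] [MeasurableSpace H] [BorelSpace H]
    (μ : Measure H) [μ.IsAddHaarMeasure] [NullSingletonClass μ] (hs : IsPuncturedSplit A B w)
    (hfar : ∃ p : H, w < ‖p‖) (hne : h ≠ 0) (hh : ‖h‖ ≤ w / 2)
    (hstay : ∀ {z : H}, w / 2 ≤ ‖z‖ → ‖z‖ ≤ 2 * w →
      (z ∈ A ∧ z + h ∈ A) ∨ (z ∈ B ∧ z + h ∈ B)) :
    flux μ A (Metric.ball 0 w) h ≠ 0 := by
  have hw := hs.pos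
  have hpos : ∀ {U : Set H}, IsOpen U → U.Nonempty → 0 < μ.real U := fun hU hUne =>
    ENNReal.toReal_pos (hU.measure_pos μ hUne).ne' (measure_ne_top μ _)
  have hcross : (crossing A B w h).Nonempty ∨ (crossing B A w h).Nonempty :=
    (hs.cover (by linarith) hne).symm.imp hs.crossing_nonempty hs.symm.crossing_nonempty
  rw [hs.flux_eq_sub μ (by linarith)]
  rcases hs.crossing_eq_empty_or hfar hh hstay with hempty | hempty
  · rw [hempty, measureReal_empty, zero_sub, neg_ne_zero]
    exact (hpos (hs.symm.isOpen_crossing h) (hcross.resolve_left (by simp [hempty]))).ne'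
  · rw [hempty, measureReal_empty, sub_zero]
    exact (hpos (hs.isOpen_crossing h) (hcross.resolve_right (by simp [hempty]))).ne'

theorem exists_isLocalCoordinate [CompactSpace H] [ConnectedSpace H] (hs : IsPuncturedSplit A B w)
    (hfar : ∃ p : H, w < ‖p‖) : ∃ lam : H → ℝ, ∃ ρ, IsLocalCoordinate lam ρ := by
  let : MeasurableSpace H := borel H
  have : BorelSpace H := ⟨rfl⟩
  obtain ⟨p, hp⟩ := hfar
  have : Nontrivial H := ⟨p, 0, by rintro rfl; simpa using hs.pos.trans hp⟩
  obtain ⟨ρ, hρ, hρw, hstay⟩ := hs.exists_forall_add_mem_iff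
  let μ : Measure H := Measure.addHaar
  have hA := hs.isOpen_left.measurableSet
  have hball : MeasurableSet (Metric.ball (0 : H) w) := measurableSet_ball
  refine ⟨flux μ A (Metric.ball 0 w), ρ, hρ, (continuous_flux μ hA hball).continuousOn,
    fun {h h'} hh hh' => ?_, fun {h} hh h0 => ?_⟩
  · have hiff : ∀ {z : H}, w / 2 ≤ ‖z‖ → ‖z‖ ≤ 2 * w → (z + h' ∈ A ↔ z ∈ A) := by
      intro z hwz hzw
      rcases hstay hwz hzw hh' with ⟨hz, hz'⟩ | ⟨hz, hz'⟩
      · exact iff_of_true hz' hz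
      · exact iff_of_false (disjoint_right.1 hs.disjoint hz') (disjoint_right.1 hs.disjoint hz)
    rw [flux_add, flux_eq_of_forall_mem_symmDiff (hball.preimage (measurable_sub_const h)) hball]
    intro z hz
    have hupper := norm_sub_le z h
    have hlower := norm_sub_norm_le z h
    simp only [mem_symmDiff, mem_preimage, mem_ball_zero_iff, not_lt] at hz
    rcases hz with ⟨hz, hz'⟩ | ⟨hz, hz'⟩ <;> exact hiff (by linarith) (by linarith [hs.pos])
  · by_contra hne
    exact hs.flux_ne_zero μ ⟨p, hp⟩ hne (hh.le.trans hρw) (fun hz hz' => hstay hz hz' hh) h0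

end IsPuncturedSplit

theorem exists_isPuncturedSplit {H : Type*} [NormedAddCommGroup H] [ConnectedSpace H]
    {A B : Set H} (hA : IsOpen A) (hB : IsOpen B) (hAB : Disjoint A B) (hAne : A.Nonempty)
    (hBne : B.Nonempty) (hfin : (A ∪ B)ᶜ.Finite) :
    ∃ d w, IsPuncturedSplit ((fun z => z + d) ⁻¹' A) ((fun z => z + d) ⁻¹' B) w ∧
      ∃ p : H, w < ‖p‖ := by
  obtain ⟨a, ha⟩ := hAne
  obtain ⟨b, hb⟩ := hBne
  have : Nontrivial H := ⟨a, b, by rintro rfl; exact disjoint_left.1 hAB ha hb⟩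
  have hcover : closure A ∪ closure B = univ := by
    rw [← closure_union, ← dense_iff_closure_eq, ← compl_compl (A ∪ B), compl_eq_univ_sdiff]
    exact dense_univ.sdiff_finite hfin
  obtain ⟨d, -, hdA, hdB⟩ := isPreconnected_closed_iff.1 isPreconnected_univ (closure A) (closure B)
    isClosed_closure isClosed_closure hcover.ge ⟨a, trivial, subset_closure ha⟩
    ⟨b, trivial, subset_closure hb⟩
  obtain ⟨q, hq⟩ := exists_ne d
  have hclosed : IsClosed (insert q ((A ∪ B)ᶜ \ {d})) :=
    ((hfin.subset sdiff_subset).insert q).isClosed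
  obtain ⟨ε, hε, hball⟩ := Metric.isOpen_iff.1 hclosed.isOpen_compl d (by simp [hq.symm])
  have hmem : ∀ {U : Set H}, d ∈ closure U → (0 : H) ∈ closure ((fun z => z + d) ⁻¹' U) := by
    intro U hU
    refine ((Homeomorph.addRight d).preimage_closure U).le ?_
    simpa using hU
  refine ⟨d, ε / 4, ⟨by positivity, hA.preimage (by fun_prop), hB.preimage (by fun_prop),
    hAB.preimage _, fun {z} hz hz0 => ?_, hmem hdA, hmem hdB⟩, q - d, ?_⟩
  · by_contra hzAB
    have hzd : z + d ∈ Metric.ball d ε := by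
      rw [Metric.mem_ball, dist_eq_norm, add_sub_cancel_right]
      linarith
    exact hball hzd (Or.inr ⟨hzAB, by simpa using hz0⟩)
  · have hqd : ¬ dist q d < ε := fun h => hball (Metric.mem_ball.2 h) (mem_insert _ _)
    rw [dist_eq_norm] at hqd
    linarith

end LocalCoordinate

section OneParameterGroup

open Filter Topology

theorem map_natCast_mul_of_map_add {G : Type*} [AddMonoid G] {g : ℝ → G} {c : ℝ} (h0 : g 0 = 0)
    (hadd : ∀ t u, |t| < c → |u| < c → |t + u| < c → g (t + u) = g t + g u) {t : ℝ} {n : ℕ}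
    (ht : n * |t| < c) : g (n * t) = n • g t := by
  induction n with
  | zero => simp [h0]
  | succ n ih =>
    push_cast at ht
    have hnt : 0 ≤ n * |t| := by positivity
    have hlt : |(n + 1 : ℝ) * t| < c := by rwa [abs_mul, abs_of_nonneg (by positivity)]
    rw [add_one_mul] at hlt
    rw [Nat.cast_succ, add_one_mul, hadd _ _ _ (by linarith [abs_nonneg t]) hlt,
      ih (by linarith [abs_nonneg t]), succ_nsmul]
    rw [abs_mul, Nat.abs_cast]
    linarith [abs_nonneg t]

theorem exists_addMonoidHom_of_map_add {G : Type*} [AddCommGroup G] {g : ℝ → G} {c : ℝ}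
    (hc : 0 < c) (hadd : ∀ t u, |t| < c → |u| < c → |t + u| < c → g (t + u) = g t + g u) :
    ∃ ψ : ℝ →+ G, ∀ t, |t| < c → ψ t = g t := by
  have h0 : g 0 = 0 := by simpa [hc] using hadd 0 0
  let s : ℕ → ℝ → G := fun n t => n • g (t / n)
  have hs_mul : ∀ {t : ℝ} {n m : ℕ}, 0 < m → |t| < c * n → s (n * m) t = s n t := by
    intro t n m hm ht
    have hn : 0 < (n : ℝ) := pos_of_mul_pos_right ((abs_nonneg t).trans_lt ht) hc.le
    have hm₀ : (m : ℝ) ≠ 0 := Nat.cast_ne_zero.2 hm.ne'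
    have heq : t / n = m * (t / (n * m : ℕ)) := by push_cast; field_simp [hm₀]
    have hlt : m * |t / (n * m : ℕ)| < c := by
      rw [← Nat.abs_cast m, ← abs_mul, ← heq, abs_div, abs_of_pos hn, div_lt_iff₀ hn]
      exact ht
    simp only [s]
    rw [heq, map_natCast_mul_of_map_add h0 hadd hlt, mul_nsmul']
  have hs_eq : ∀ {t : ℝ} {n m : ℕ}, |t| < c * n → |t| < c * m → s n t = s m t := by
    intro t n m hn hm
    have hpos : ∀ {k : ℕ}, |t| < c * k → 0 < k := fun hk =>
      Nat.cast_pos.1 (pos_of_mul_pos_right ((abs_nonneg t).trans_lt hk) hc.le)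
    rw [← hs_mul (hpos hm) hn, mul_comm, hs_mul (hpos hn) hm]
  have hN : ∀ t : ℝ, ∃ n : ℕ, |t| < c * n := fun t =>
    (exists_nat_gt (|t| / c)).imp fun n hn => by rwa [div_lt_iff₀' hc] at hn
  choose N hN using hN
  refine ⟨AddMonoidHom.mk' (fun t => s (N t) t) fun t u => ?_, fun t ht => ?_⟩
  · obtain ⟨n, hn⟩ := exists_nat_gt ((|t| + |u|) / c)
    have hn0 : 0 < (n : ℝ) := lt_of_le_of_lt (by positivity) hn
    rw [div_lt_iff₀' hc] at hn
    have ht : |t| < c * n := by linarith [abs_nonneg u]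
    have hu : |u| < c * n := by linarith [abs_nonneg t]
    have htu : |t + u| < c * n := (abs_add_le t u).trans_lt hn
    have hdiv : ∀ {v : ℝ}, |v| < c * n → |v / n| < c := fun {v} hv => by
      rwa [abs_div, Nat.abs_cast, div_lt_iff₀ hn0]
    rw [hs_eq (hN t) ht, hs_eq (hN u) hu, hs_eq (hN (t + u)) htu]
    simp only [s]
    rw [add_div, hadd _ _ (hdiv ht) (hdiv hu) (add_div t u n ▸ hdiv htu), nsmul_add]
  · rw [AddMonoidHom.mk'_apply, hs_eq (hN t) (m := 1) (by simpa using ht)]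
    simp [s]

namespace IsLocalCoordinate

variable {H : Type*} [NormedAddCommGroup H] {lam : H → ℝ} {ρ s : ℝ} {h h' : H} {ψ : ℝ →+ H}

theorem map_zero (hl : IsLocalCoordinate lam ρ) : lam 0 = 0 := by
  have h0 : ‖(0 : H)‖ < ρ := by simpa using hl.pos
  simpa using hl.map_add h0 h0

theorem map_neg (hl : IsLocalCoordinate lam ρ) (hh : ‖h‖ < ρ) : lam (-h) = -lam h := by
  have := hl.map_add hh (by rwa [norm_neg])
  rw [add_neg_cancel, hl.map_zero] at this
  linarith

theorem eq_of_map_eq (hl : IsLocalCoordinate lam ρ) (hh : ‖h‖ + ‖h'‖ < ρ) (heq : lam h = lam h') :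
    h = h' := by
  have hρ : ‖h‖ < ρ := by linarith [norm_nonneg h']
  have hρ' : ‖h'‖ < ρ := by linarith [norm_nonneg h]
  rw [← sub_eq_zero]
  refine hl.eq_zero ((norm_sub_le h h').trans_lt hh) ?_
  rw [sub_eq_add_neg, hl.map_add hρ (by rwa [norm_neg]), hl.map_neg hρ', heq, add_neg_cancel]

theorem continuousOn_closedBall (hl : IsLocalCoordinate lam ρ) (hsρ : s < ρ) :
    ContinuousOn (fun h => |lam h|) (Metric.closedBall 0 s) :=
  (hl.continuousOn.mono (Metric.closedBall_subset_ball hsρ)).abs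

theorem exists_pos_le_abs_of_norm_eq [CompactSpace H] (hl : IsLocalCoordinate lam ρ) (hs : 0 < s)
    (hsρ : s < ρ) : ∃ c > 0, ∀ h : H, ‖h‖ = s → c ≤ |lam h| := by
  rcases (Metric.sphere (0 : H) s).eq_empty_or_nonempty with hempty | hne
  · refine ⟨1, one_pos, fun h hh => ?_⟩
    exact absurd (mem_sphere_zero_iff_norm.2 hh) (hempty ▸ notMem_empty h)
  · obtain ⟨z, hz, hmin⟩ := (isCompact_sphere (0 : H) s).exists_isMinOn hne
      ((hl.continuousOn_closedBall hsρ).mono Metric.sphere_subset_closedBall)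
    rw [mem_sphere_zero_iff_norm] at hz
    refine ⟨|lam z|, abs_pos.2 fun h0 => ?_, fun h hh => hmin (mem_sphere_zero_iff_norm.2 hh)⟩
    rw [hl.eq_zero (hz.trans_lt hsρ) h0, norm_zero] at hz
    exact hs.ne hz

theorem exists_abs_eq [PreconnectedSpace H] (hl : IsLocalCoordinate lam ρ) (hs : 0 < s)
    (hsρ : s < ρ) (hfar : ∃ q : H, s < ‖q‖) {c τ : ℝ} (hc : ∀ h : H, ‖h‖ = s → c ≤ |lam h|)
    (hτ : 0 ≤ τ) (hτc : τ < c) : ∃ h : H, ‖h‖ < s ∧ |lam h| = τ := by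
  by_contra! hno
  have hcont := hl.continuousOn_closedBall hsρ
  have hclosed : IsClosed (Metric.closedBall (0 : H) s ∩ (fun h => |lam h|) ⁻¹' Iic τ) :=
    hcont.preimage_isClosed_of_isClosed Metric.isClosed_closedBall isClosed_Iic
  have hopen : IsOpen (Metric.ball (0 : H) s ∩ (fun h => |lam h|) ⁻¹' Iio τ) :=
    (hcont.mono Metric.ball_subset_closedBall).isOpen_inter_preimage Metric.isOpen_ball isOpen_Iio
  have heq : Metric.closedBall (0 : H) s ∩ (fun h => |lam h|) ⁻¹' Iic τ =
      Metric.ball 0 s ∩ (fun h => |lam h|) ⁻¹' Iio τ := by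
    refine Subset.antisymm (fun h ⟨hhs, hhτ⟩ => ?_)
      (inter_subset_inter Metric.ball_subset_closedBall (preimage_mono Iio_subset_Iic_self))
    rw [mem_closedBall_zero_iff] at hhs
    have hlt : ‖h‖ < s := hhs.lt_of_ne fun he => ((hc h he).trans hhτ).not_gt hτc
    exact ⟨mem_ball_zero_iff.2 hlt, lt_of_le_of_ne hhτ (hno h hlt)⟩
  have huniv := IsClopen.eq_univ ⟨hclosed, heq ▸ hopen⟩
    ⟨0, Metric.mem_closedBall_self hs.le, by simpa [hl.map_zero] using hτ⟩
  obtain ⟨q, hq⟩ := hfar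
  have hqs := (huniv.ge (mem_univ q)).1
  exact (mem_closedBall_zero_iff.1 hqs).not_gt hq

theorem eventually_exists_map_eq [CompactSpace H] [PreconnectedSpace H]
    (hl : IsLocalCoordinate lam ρ) (hs : 0 < s) (hsρ : s < ρ) (hfar : ∃ q : H, s < ‖q‖) :
    ∀ᶠ τ in 𝓝 0, ∃ h : H, ‖h‖ < s ∧ lam h = τ := by
  obtain ⟨c, hc, hcs⟩ := hl.exists_pos_le_abs_of_norm_eq hs hsρ
  filter_upwards [Metric.ball_mem_nhds (0 : ℝ) hc] with τ hτ
  rw [mem_ball_zero_iff, Real.norm_eq_abs] at hτ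
  obtain ⟨h, hh, heq⟩ := hl.exists_abs_eq hs hsρ hfar hcs (abs_nonneg τ) hτ
  rcases abs_eq_abs.1 heq with heq | heq
  · exact ⟨h, hh, heq⟩
  · exact ⟨-h, by rwa [norm_neg], by rw [hl.map_neg (hh.trans hsρ), heq, neg_neg]⟩

theorem exists_addMonoidHom [CompactSpace H] [PreconnectedSpace H] [Nontrivial H]
    (hl : IsLocalCoordinate lam ρ) :
    ∃ ψ : ℝ →+ H, ∀ᶠ t in 𝓝 0, ‖ψ t‖ < ρ / 2 ∧ lam (ψ t) = t := by
  obtain ⟨q, hq⟩ := exists_ne (0 : H)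
  have hρ := hl.pos
  have hqpos : 0 < ‖q‖ := norm_pos_iff.2 hq
  let s := min (ρ / 4) (‖q‖ / 2)
  have hsρ : s ≤ ρ / 4 := min_le_left _ _
  have hsq : s < ‖q‖ := (min_le_right _ _).trans_lt (by linarith)
  obtain ⟨c, hc, hsec⟩ := Metric.eventually_nhds_iff.1
    (hl.eventually_exists_map_eq (by positivity) (by linarith) ⟨q, hsq⟩)
  have hsec' : ∀ t : ℝ, |t| < c → ∃ h : H, ‖h‖ < s ∧ lam h = t := fun t ht =>
    hsec (by simpa using ht)
  choose! g hg using hsec'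
  obtain ⟨ψ, hψ⟩ := exists_addMonoidHom_of_map_add (g := g) hc fun t u ht hu htu => by
    obtain ⟨ht, hlt⟩ := hg t ht
    obtain ⟨hu, hlu⟩ := hg u hu
    obtain ⟨htu, hltu⟩ := hg (t + u) htu
    refine hl.eq_of_map_eq (by linarith [norm_add_le (g t) (g u)]) ?_
    rw [hl.map_add (by linarith) (by linarith), hlt, hlu, hltu]
  refine ⟨ψ, ?_⟩
  filter_upwards [Metric.ball_mem_nhds (0 : ℝ) hc] with t ht
  rw [mem_ball_zero_iff, Real.norm_eq_abs] at ht
  rw [hψ t ht]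
  exact ⟨(hg t ht).1.trans_le (by linarith), (hg t ht).2⟩

theorem continuous_of_eventually [CompactSpace H] [PreconnectedSpace H] [Nontrivial H]
    (hl : IsLocalCoordinate lam ρ) (hψ : ∀ᶠ t in 𝓝 0, ‖ψ t‖ < ρ / 2 ∧ lam (ψ t) = t) :
    Continuous ψ := by
  refine continuous_of_continuousAt_zero ψ ?_
  obtain ⟨q, hq⟩ := exists_ne (0 : H)
  have hρ := hl.pos
  have hqpos : 0 < ‖q‖ := norm_pos_iff.2 hq
  rw [ContinuousAt, _root_.map_zero, Metric.tendsto_nhds]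
  intro ε hε
  let s := min ε (min (ρ / 2) (‖q‖ / 2))
  have hsε : s ≤ ε := min_le_left _ _
  have hsρ : s ≤ ρ / 2 := (min_le_right _ _).trans (min_le_left _ _)
  have hsq : s ≤ ‖q‖ / 2 := (min_le_right _ _).trans (min_le_right _ _)
  filter_upwards [hψ, hl.eventually_exists_map_eq (s := s) (by positivity) (by linarith)
    ⟨q, by linarith⟩] with t ⟨ht, hlt⟩ ⟨h, hh, hlh⟩
  rw [dist_zero_right, hl.eq_of_map_eq (by linarith) (hlt.trans hlh.symm)]
  exact hh.trans_le hsε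

theorem range_mem_nhds_zero (hl : IsLocalCoordinate lam ρ)
    (hψ : ∀ᶠ t in 𝓝 0, ‖ψ t‖ < ρ / 2 ∧ lam (ψ t) = t) : (ψ.range : Set H) ∈ 𝓝 0 := by
  have hlim : Tendsto lam (𝓝 0) (𝓝 0) := by
    have := hl.continuousOn.continuousAt (Metric.ball_mem_nhds 0 hl.pos)
    rwa [ContinuousAt, hl.map_zero] at this
  filter_upwards [hlim.eventually hψ, Metric.ball_mem_nhds 0 (half_pos hl.pos)] with h ⟨ht, hlt⟩ hh
  rw [mem_ball_zero_iff] at hh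
  exact ⟨lam h, hl.eq_of_map_eq (by linarith) hlt⟩

end IsLocalCoordinate

theorem surjective_of_range_mem_nhds_zero {G H : Type*} [AddGroup G] [AddGroup H]
    [TopologicalSpace H] [SeparatelyContinuousAdd H] [PreconnectedSpace H] {ψ : G →+ H}
    (hψ : (ψ.range : Set H) ∈ 𝓝 0) : Function.Surjective ψ := by
  have hopen : IsOpen (ψ.range : Set H) := AddSubgroup.isOpen_of_mem_nhds _ hψ
  exact range_eq_univ.1
    (IsClopen.eq_univ ⟨AddSubgroup.isClosed_of_isOpen _ hopen, hopen⟩ ⟨0, ψ.range.zero_mem⟩)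

section Circle

variable {H : Type*} [AddGroup H] [TopologicalSpace H] [CompactSpace H] [T2Space H]
  [ContinuousAdd H]

theorem ker_ne_bot_of_continuous_surjective {ψ : ℝ →+ H} (hcont : Continuous ψ)
    (hsurj : Function.Surjective ψ) : ψ.ker ≠ ⊥ := fun hker => by
  have hinj : Function.Injective ψ := (AddMonoidHom.ker_eq_bot_iff ψ).1 hker
  have hopen : IsOpenMap ψ := AddMonoidHom.isOpenMap_of_sigmaCompact ψ hsurj hcont
  let e := (Equiv.ofBijective ψ ⟨hinj, hsurj⟩).toHomeomorphOfContinuousOpen hcont hopen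
  exact not_compactSpace_iff.2 inferInstance e.symm.compactSpace

theorem exists_ker_eq_zmultiples [Nontrivial H] {ψ : ℝ →+ H}
    (hcont : Continuous ψ) (hsurj : Function.Surjective ψ) :
    ∃ b ≠ 0, ψ.ker = AddSubgroup.zmultiples b := by
  rcases AddSubgroup.dense_or_cyclic ψ.ker with hdense | ⟨b, hb⟩
  · have hclosed : IsClosed (ψ.ker : Set ℝ) := isClosed_singleton.preimage hcont
    obtain ⟨q, hq⟩ := exists_ne (0 : H)
    obtain ⟨t, rfl⟩ := hsurj q
    have ht : t ∈ (ψ.ker : Set ℝ) := hclosed.closure_eq ▸ hdense t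
    exact absurd ht hq
  · rw [← AddSubgroup.zmultiples_eq_closure] at hb
    refine ⟨b, ?_, hb⟩
    rintro rfl
    exact ker_ne_bot_of_continuous_surjective hcont hsurj (by simpa using hb)

theorem exists_circle_bijective [Nontrivial H] {ψ : ℝ →+ H}
    (hcont : Continuous ψ) (hsurj : Function.Surjective ψ) :
    ∃ φ : T1 →+ H, Continuous φ ∧ Function.Bijective φ := by
  obtain ⟨b, hb, hker⟩ := exists_ker_eq_zmultiples hcont hsurj
  have hzero : ∀ t : ℝ, ψ (b * t) = 0 ↔ t ∈ AddSubgroup.zmultiples (1 : ℝ) := by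
    intro t
    rw [← AddMonoidHom.mem_ker, hker, AddSubgroup.mem_zmultiples_iff,
      AddSubgroup.mem_zmultiples_iff]
    refine exists_congr fun k => ?_
    rw [zsmul_eq_mul, zsmul_eq_mul, mul_one, mul_comm, mul_right_inj' hb]
  let φ : T1 →+ H := QuotientAddGroup.lift _ (ψ.comp (AddMonoidHom.mulLeft b))
    fun t ht => (hzero t).2 ht
  refine ⟨φ, (hcont.comp (continuous_const_mul b)).quotient_lift _, ?_, fun h => ?_⟩
  · refine (injective_iff_map_eq_zero φ).2 fun q hq => ?_
    obtain ⟨t, rfl⟩ := QuotientAddGroup.mk_surjective q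
    exact (QuotientAddGroup.eq_zero_iff t).2 ((hzero t).1 hq)
  · obtain ⟨t, rfl⟩ := hsurj h
    exact ⟨(t / b : ℝ), congrArg ψ (mul_div_cancel₀ t hb)⟩

end Circle

theorem IsLocalCoordinate.exists_circle_bijective {H : Type*} [NormedAddCommGroup H]
    [CompactSpace H] [PreconnectedSpace H] [Nontrivial H] {lam : H → ℝ} {ρ : ℝ}
    (hl : IsLocalCoordinate lam ρ) : ∃ φ : T1 →+ H, Continuous φ ∧ Function.Bijective φ := by
  obtain ⟨ψ, hψ⟩ := hl.exists_addMonoidHom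
  exact _root_.exists_circle_bijective (hl.continuous_of_eventually hψ)
    (surjective_of_range_mem_nhds_zero (hl.range_mem_nhds_zero hψ))

end OneParameterGroup

section Coding

theorem injective_coe_natCast_mul_iff {β : ℝ} :
    Function.Injective (fun n : ℕ => ((n * β : ℝ) : T1)) ↔ Irrational β := by
  simp only [← nsmul_eq_mul, AddCircle.coe_nsmul]
  rw [injective_nsmul_iff_not_isOfFinAddOrder, AddCircle.not_isOfFinAddOrder_iff_forall_rat_ne_div]
  simp [Irrational]

theorem IsArc.isPreconnected {I : Set T1} (hI : IsArc I) : IsPreconnected I := by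
  have hcont : Continuous fun t : ℝ => (t : T1) := AddCircle.continuous_mk' 1
  obtain ⟨a, b, -, rfl | rfl | rfl | rfl⟩ := hI
  exacts [isPreconnected_Icc.image _ hcont.continuousOn,
    isPreconnected_Ico.image _ hcont.continuousOn, isPreconnected_Ioc.image _ hcont.continuousOn,
    isPreconnected_Ioo.image _ hcont.continuousOn]

theorem isArc_image_coe {J : Set ℝ} (hJ : J.OrdConnected) (hsub : J ⊆ Ico 0 1) :
    IsArc ((fun t : ℝ => (t : T1)) '' J) := by
  rcases J.eq_empty_or_nonempty with rfl | hne
  · exact ⟨0, 0, by simp⟩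
  have hbelow : BddBelow J := bddBelow_Ico.mono hsub
  have habove : BddAbove J := bddAbove_Ico.mono hsub
  have hinf : 0 ≤ sInf J := le_csInf hne fun t ht => (hsub ht).1
  have hsup : sSup J ≤ 1 := csSup_le hne fun t ht => (hsub ht).2.le
  refine ⟨sInf J, sSup J, by linarith, ?_⟩
  have hconn : IsConnected J := ⟨hne, hJ.isPreconnected⟩
  exact (mem_Icc_Ico_Ioc_Ioo_of_subset_of_subset (hconn.Ioo_csInf_csSup_subset hbelow habove)
    (subset_Icc_csInf_csSup hbelow habove)).imp (congrArg _)
    (Or.imp (congrArg _) (Or.imp (congrArg _) (congrArg _)))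

/-- The number of points of `F` below `t`, with a point equal to `t` counted by one half, and
then doubled. Its fibers are the points of `F` and the gaps between them. -/
noncomputable def rankAt (F : Finset ℝ) (t : ℝ) : ℕ :=
  (F.filter (· < t)).card + (F.filter (· ≤ t)).card

theorem rankAt_mono (F : Finset ℝ) : Monotone (rankAt F) := fun _ _ hst =>
  add_le_add
    (Finset.card_le_card (Finset.monotone_filter_right F fun _ _ h => lt_of_lt_of_le h hst))
    (Finset.card_le_card (Finset.monotone_filter_right F fun _ _ h => le_trans h hst))

theorem rankAt_lt (F : Finset ℝ) (t : ℝ) : rankAt F t < 2 * F.card + 1 := by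
  have h₁ := Finset.card_filter_le F (· < t)
  have h₂ := Finset.card_filter_le F (· ≤ t)
  unfold rankAt
  lia

theorem rankAt_lt_rankAt {F : Finset ℝ} {s t : ℝ} (hst : s < t) (hF : s ∈ F ∨ t ∈ F) :
    rankAt F s < rankAt F t := by
  have hlt : F.filter (· < s) ⊆ F.filter (· < t) :=
    Finset.monotone_filter_right F fun _ _ h => lt_trans h hst
  have hle : F.filter (· ≤ s) ⊆ F.filter (· ≤ t) :=
    Finset.monotone_filter_right F fun _ _ h => le_trans h hst.le
  rcases hF with hs | ht
  · refine add_lt_add_of_lt_of_le (Finset.card_lt_card ?_) (Finset.card_le_card hle)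
    exact (Finset.ssubset_iff_of_subset hlt).2 ⟨s, by simp [hs, hst], by simp⟩
  · refine add_lt_add_of_le_of_lt (Finset.card_le_card hlt) (Finset.card_lt_card ?_)
    exact (Finset.ssubset_iff_of_subset hle).2 ⟨t, by simp [ht], by simp [hst]⟩

theorem exists_arc_partition {P : Set T1} (hP : P.Finite) :
    ∃ k, ∃ I : Fin (k + 1) → Set T1, (∀ i, IsArc (I i)) ∧
      (Pairwise fun i j => Disjoint (I i) (I j)) ∧ ⋃ i, I i = univ ∧
      ∀ i, (I i).Subsingleton ∨ Disjoint (I i) P := by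
  classical
  let r : T1 → ℝ := fun q => AddCircle.equivIco 1 0 q
  have hr : ∀ q, (r q : T1) = q := fun q => AddCircle.coe_equivIco
  have hrmem : ∀ q, r q ∈ Ico (0 : ℝ) 1 := fun q => by
    simpa using (AddCircle.equivIco 1 0 q).2
  have hrcoe : ∀ {t : ℝ}, t ∈ Ico (0 : ℝ) 1 → r t = t := fun ht =>
    AddCircle.equivIco_coe_of_mem (by simpa using ht)
  let F := hP.toFinset.image r
  refine ⟨2 * F.card, fun i => {q | rankAt F (r q) = i}, fun i => ?_, fun i j hij => ?_, ?_,
    fun i => ?_⟩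
  · have himage : {q | rankAt F (r q) = i} =
        (fun t : ℝ => (t : T1)) '' (rankAt F ⁻¹' {(i : ℕ)} ∩ Ico 0 1) := by
      ext q
      refine ⟨fun hq => ⟨r q, ⟨hq, hrmem q⟩, hr q⟩, ?_⟩
      rintro ⟨t, ⟨hti, ht⟩, rfl⟩
      rwa [mem_ofPred_eq, hrcoe ht]
    simp only [himage]
    exact isArc_image_coe ((ordConnected_singleton.preimage_mono (rankAt_mono F)).inter
      ordConnected_Ico) inter_subset_right
  · exact disjoint_left.2 fun q hi hj => hij (Fin.ext (hi.symm.trans hj))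
  · exact eq_univ_of_forall fun q => mem_iUnion.2 ⟨⟨rankAt F (r q), rankAt_lt F _⟩, rfl⟩
  · refine or_iff_not_imp_right.2 fun hmeet => ?_
    obtain ⟨p, hpi, hp⟩ := not_disjoint_iff.1 hmeet
    have hpF : r p ∈ F := Finset.mem_image_of_mem r (hP.mem_toFinset.2 hp)
    refine subsingleton_of_forall_eq p fun q hq => ?_
    have hrank : rankAt F (r q) = rankAt F (r p) := hq.trans hpi.symm
    rw [← hr q, ← hr p]
    rcases lt_trichotomy (r q) (r p) with hlt | heq | hlt
    · exact absurd hrank (rankAt_lt_rankAt hlt (Or.inr hpF)).ne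
    · rw [heq]
    · exact absurd hrank (rankAt_lt_rankAt hlt (Or.inl hpF)).ne'

theorem eq_const_or_circleRotationCoding {β : ℝ} (hβ : Irrational β) {F : Fin 2 → Set T1}
    (hclosed : ∀ a, IsClosed (F a)) (hcover : F 0 ∪ F 1 = univ) (hfin : (F 0 ∩ F 1).Finite)
    {y : Seq2} (hy : ∀ n : ℕ, ((n * β : ℝ) : T1) ∈ F (y n)) :
    (∃ c, ∀ n, y n = c) ∨ CircleRotationCoding β y := by
  obtain ⟨k, I, harc, hdisj, hunion, hI⟩ := exists_arc_partition hfin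
  have hsame : ∀ {i : Fin (k + 1)} {n m : ℕ}, ((n * β : ℝ) : T1) ∈ I i →
      ((m * β : ℝ) : T1) ∈ I i → y n = y m := by
    intro i n m hn hm
    rcases hI i with hsub | hoff
    · rw [injective_coe_natCast_mul_iff.2 hβ (hsub hn hm)]
    have hmono : ∀ {p q : ℕ}, ((p * β : ℝ) : T1) ∈ I i → ((q * β : ℝ) : T1) ∈ I i →
        y p = 0 → y q ≠ 1 := by
      intro p q hp hq hyp hyq
      have hcross := isPreconnected_closed_iff.1 (harc i).isPreconnected (F 0) (F 1) (hclosed 0)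
        (hclosed 1) (hcover ▸ subset_univ _) ⟨_, hp, hyp ▸ hy p⟩ ⟨_, hq, hyq ▸ hy q⟩
      exact hcross.ne_empty hoff.inter_eq
    have hnm := hmono hn hm
    have hmn := hmono hm hn
    lia
  choose i hi using fun n : ℕ => mem_iUnion.1 (hunion.ge (mem_univ ((n * β : ℝ) : T1)))
  have hfactors : y.FactorsThrough i := fun n m hnm => hsame (hi n) (hnm ▸ hi m)
  have hletter : ∀ (n : ℕ) (j : Fin (k + 1)), ((n * β : ℝ) : T1) ∈ I j →
      y n = Function.extend i y 0 j := by
    intro n j hj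
    rw [hdisj.eq (not_disjoint_iff.2 ⟨_, hj, hi n⟩), hfactors.extend_apply]
  rw [or_iff_not_imp_left]
  refine fun hconst => ⟨k + 1, k.succ_pos, I, _, harc, hdisj, hunion, fun hall => ?_, hletter⟩
  exact hconst ⟨_, fun n => (hletter n (i n) (hi n)).trans (hall (i n) 0)⟩

namespace IsBesicovitchModel

variable {x : Seq2} {C K : ℕ} {H : Type*} [NormedAddCommGroup H] {ι : ℤ →+ H}

theorem exists_circle_bijective [CompactSpace H] [PreconnectedSpace H]
    (hι : IsBesicovitchModel x K ι) (hK : 1 ≤ K) (hrec : Recurrent x)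
    (hur : UniformlyRecurrent x) (hper : ¬ Periodic x) (htame : CofinallyTame C x) :
    ∃ φ : T1 →+ H, Continuous φ ∧ Function.Bijective φ := by
  have : ConnectedSpace H := ⟨⟨0⟩⟩
  obtain ⟨j, -, hne⟩ := hι.exists_letterClosure_ne_univ hK hrec hur hper htame
  have hopen : ∀ a, IsOpen (letterClosure ι x K j a)ᶜ := fun a => isClosed_closure.isOpen_compl
  have hdisj : Disjoint (letterClosure ι x K j 0)ᶜ (letterClosure ι x K j 1)ᶜ := by
    rw [disjoint_iff_inter_eq_empty, ← compl_union, hι.letterClosure_union hK hrec, compl_univ]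
  have hfin : ((letterClosure ι x K j 0)ᶜ ∪ (letterClosure ι x K j 1)ᶜ)ᶜ.Finite := by
    rw [← compl_inter, compl_compl]
    exact hι.finite_boundary hK hrec htame j zero_ne_one
  obtain ⟨d, w, hsplit, hfar⟩ := exists_isPuncturedSplit (hopen 0) (hopen 1) hdisj
    (nonempty_compl.2 (hne 0)) (nonempty_compl.2 (hne 1)) hfin
  obtain ⟨lam, ρ, hlam⟩ := hsplit.exists_isLocalCoordinate hfar
  have : Nontrivial H := hfar.elim fun p hp => ⟨p, 0, norm_pos_iff.1 (hsplit.pos.trans hp)⟩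
  exact hlam.exists_circle_bijective

theorem exists_irrational_coding (hι : IsBesicovitchModel x K ι) (hK : 1 ≤ K)
    (hrec : Recurrent x) (htame : CofinallyTame C x) {φ : T1 →+ H} (hcont : Continuous φ)
    (hbij : Function.Bijective φ) :
    ∃ β : ℝ, Irrational β ∧ ∀ j, (∃ c, ∀ n, x (j + K * n) = c) ∨
      CircleRotationCoding β (fun n => x (j + K * n)) := by
  obtain ⟨θ, hθ⟩ := hbij.2 (ι 1)
  obtain ⟨β, rfl⟩ := QuotientAddGroup.mk_surjective θ
  have hφ : ∀ n : ℕ, φ ((n * β : ℝ) : T1) = ι n := by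
    intro n
    rw [← nsmul_eq_mul, AddCircle.coe_nsmul, map_nsmul]
    exact (congrArg (n • ·) hθ).trans (by rw [← map_nsmul, nsmul_eq_mul, mul_one])
  have hirr : Irrational β := injective_coe_natCast_mul_iff.1 fun n m hnm =>
    Nat.cast_injective (hι.injective ((hφ n).symm.trans ((congrArg φ hnm).trans (hφ m))))
  refine ⟨β, hirr, fun j => eq_const_or_circleRotationCoding hirr
    (F := fun a => φ ⁻¹' letterClosure ι x K j a) (fun a => isClosed_closure.preimage hcont)
    ?_ ?_ fun n => ?_⟩
  · rw [← preimage_union, hι.letterClosure_union hK hrec, preimage_univ]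
  · rw [← preimage_inter]
    exact (hι.finite_boundary hK hrec htame j zero_ne_one).preimage hbij.1.injOn
  · rw [mem_preimage, hφ]
    exact mem_letterClosure ι x K j n

end IsBesicovitchModel

theorem IsMaximalPeriod.exists_irrational_coding {x : Seq2} {C K : ℕ} (hK : IsMaximalPeriod x K)
    (hrec : Recurrent x) (hur : UniformlyRecurrent x) (hper : ¬ Periodic x)
    (htame : CofinallyTame C x) :
    ∃ β : ℝ, Irrational β ∧ ∀ j, (∃ c, ∀ n, x (j + K * n) = c) ∨
      CircleRotationCoding β (fun n => x (j + K * n)) := by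
  obtain ⟨H, _, _, ι, hι⟩ := hK.exists_isBesicovitchModel hur hper htame
  have := hι.preconnectedSpace hK
  obtain ⟨φ, hcont, hbij⟩ := hι.exists_circle_bijective hK.pos hrec hur hper htame
  exact hι.exists_irrational_coding hK.pos hrec htame hcont hbij

end Coding

/-- structure of recurrent, nonperiodic sequences with non-superlinear
maximal pattern complexity. -/
theorem stmt3 (x : Seq2) (hrec : Recurrent x) (hper : ¬ Periodic x)
    (hnsl : ∃ C : ℝ, ∀ N : ℕ, ∃ n : ℕ, N ≤ n ∧ (pstar x n : ℝ) ≤ C * n) :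
    UniformlyRecurrent x ∧
      ((∃ K : ℕ, 1 ≤ K ∧ ∃ β : ℝ, Irrational β ∧
          ∀ j < K, (∃ c : Fin 2, ∀ n : ℕ, x (j + K * n) = c) ∨
            CircleRotationCoding β (fun n => x (j + K * n))) ∨
       (∃ m : ℕ, 1 ≤ m ∧ ∃ z : Seq2, MHoleToeplitz m z ∧ x ∈ orbitClosure z)) := by
  have hns := NonSuperlinear.of_pstar hnsl
  have hur := hrec.uniformlyRecurrent hns
  refine ⟨hur, ?_⟩
  obtain ⟨C, htame⟩ := hns.exists_cofinallyTame
  rcases exists_toeplitz_or_isMaximalPeriod hrec hur hper htame with htoeplitz | ⟨K, hK⟩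
  · exact Or.inr htoeplitz
  · obtain ⟨β, hβ, hcoding⟩ := hK.exists_irrational_coding hrec hur hper htame
    exact Or.inl ⟨K, hK.pos, β, hβ, fun j _ => hcoding j⟩
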